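/- Let f be a rational map of degree at least 2 with Julia set J. For any two disjoint f-expanding Cantor repellers Λ₁, Λ₂ ⊂ J that both contain non-immediately postcritical points, there exists an f-expanding Cantor repeller Λ ⊂ J containing Λ₁ ∪ Λ₂. Moreover, if f is topologically transitive on each Λᵢ (i = 1, 2), then f is topologically transitive on Λ. -/

import Mathlib

open Filter Set Metric MeasureTheory Topology
open scoped ENNReal NNReal

noncomputable section

/-! ### The Riemann sphere with the chordal (spherical) metric -/

/-- The Riemann sphere `ℂ ∪ {∞}`. -/
structure RSphere : Type where
  val : Option ℂ

namespace RSphere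

/-- The inclusion of `ℂ` into the Riemann sphere. -/
def ofC (z : ℂ) : RSphere := ⟨some z⟩

/-- The point at infinity. -/
def infty : RSphere := ⟨none⟩

/-- Case elimination on a point of the Riemann sphere. -/
def elim {α : Sort*} (x : RSphere) (i : α) (h : ℂ → α) : α := Option.elim x.val i h

/-- Stereographic embedding of the Riemann sphere onto the round unit sphere in
`ℝ³ = ℂ ×₂ ℝ`.  It induces the chordal (spherical) metric on `RSphere`. -/
def embed (x : RSphere) : WithLp 2 (ℂ × ℝ) :=
  elim x ((WithLp.equiv 2 (ℂ × ℝ)).symm (0, 1))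
    fun z => (WithLp.equiv 2 (ℂ × ℝ)).symm
      (((2 / (‖z‖ ^ 2 + 1)) : ℝ) • z, (‖z‖ ^ 2 - 1) / (‖z‖ ^ 2 + 1))

/-- Inverse of the stereographic embedding. -/
def unembed (v : WithLp 2 (ℂ × ℝ)) : RSphere :=
  if (WithLp.equiv 2 (ℂ × ℝ) v).2 = 1 then infty
  else ofC ((1 - (WithLp.equiv 2 (ℂ × ℝ) v).2)⁻¹ • (WithLp.equiv 2 (ℂ × ℝ) v).1)

lemma leftInverse_unembed : Function.LeftInverse unembed embed := by
  rintro ⟨x⟩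
  cases x with
  | none =>
      simp [embed, unembed, elim, infty]
  | some z =>
      have h1 : (0 : ℝ) < ‖z‖ ^ 2 + 1 := by positivity
      have ht : (‖z‖ ^ 2 - 1) / (‖z‖ ^ 2 + 1) ≠ 1 := by
        intro h
        rw [div_eq_one_iff_eq h1.ne'] at h
        linarith
      simp only [embed, unembed, elim, Option.elim, Equiv.apply_symm_apply, ht, if_false, ofC]
      congr 2
      rw [smul_smul]
      have h2 : 1 - (‖z‖ ^ 2 - 1) / (‖z‖ ^ 2 + 1) = 2 / (‖z‖ ^ 2 + 1) := by
        field_simp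
        ring
      rw [h2]
      rw [inv_mul_cancel₀ (by positivity), one_smul]

lemma embed_injective : Function.Injective embed := leftInverse_unembed.injective

/-- The chordal metric on the Riemann sphere, induced by the stereographic embedding
onto the round unit sphere in Euclidean 3-space. -/
instance : MetricSpace RSphere := MetricSpace.induced embed embed_injective inferInstance

instance : MeasurableSpace RSphere := borel RSphere

instance : BorelSpace RSphere := ⟨rfl⟩

/-- Reading off a finite point (junk value `0` at `∞`). -/
def toC (x : RSphere) : ℂ := elim x 0 id

/-- The involution `z ↦ 1/z` of the Riemann sphere. -/
def inv (x : RSphere) : RSphere :=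
  elim x (ofC 0) fun z => if z = 0 then infty else ofC z⁻¹

end RSphere

/-! ### Basic dynamical notions -/

/-- The norm of the derivative of `g` at `x`, measured in the spherical metric
(for a rational map this is the usual norm of the spherical derivative). -/
def sphDeriv (g : RSphere → RSphere) (x : RSphere) : ℝ :=
  limsup (fun y => dist (g y) (g x) / dist y x) (𝓝[≠] x)

/-- The set of critical points. -/
def critSet (g : RSphere → RSphere) : Set RSphere := {x | sphDeriv g x = 0}

/-- The Fatou set: points having a neighbourhood on which the family of iterates is
equicontinuous (i.e. normal). -/
def fatouSet (f : RSphere → RSphere) : Set RSphere :=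
  {x | ∃ U : Set RSphere, IsOpen U ∧ x ∈ U ∧ EquicontinuousOn (fun n : ℕ => f^[n]) U}

/-- The Julia set. -/
def juliaSet (f : RSphere → RSphere) : Set RSphere := (fatouSet f)ᶜ

/-- `f` is the rational map on the Riemann sphere given by the coprime pair of
polynomials `p`, `q`. -/
structure IsRationalMap (f : RSphere → RSphere) (p q : Polynomial ℂ) : Prop where
  coprime : IsCoprime p q
  continuous : Continuous f
  eval : ∀ z : ℂ, q.eval z ≠ 0 → f (RSphere.ofC z) = RSphere.ofC (p.eval z / q.eval z)

/-- The degree of the rational map `p/q`. -/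
def ratDeg (p q : Polynomial ℂ) : ℕ := max p.natDegree q.natDegree

/-- The lower Lyapunov exponent `χ̲(x) = liminf (1/n) log |(fⁿ)'(x)|`, as an extended real. -/
def lyapLower (f : RSphere → RSphere) (x : RSphere) : EReal :=
  liminf (fun n : ℕ => ((Real.log (sphDeriv (f^[n]) x) / n : ℝ) : EReal)) atTop

/-- The upper Lyapunov exponent `χ̄(x) = limsup (1/n) log |(fⁿ)'(x)|`, as an extended real. -/
def lyapUpper (f : RSphere → RSphere) (x : RSphere) : EReal :=
  limsup (fun n : ℕ => ((Real.log (sphDeriv (f^[n]) x) / n : ℝ) : EReal)) atTop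

/-- The level set `𝓛(a,b)` of points of the Julia set with lower exponent `a` and
upper exponent `b`. -/
def levelSet (f : RSphere → RSphere) (a b : EReal) : Set RSphere :=
  {x | x ∈ juliaSet f ∧ lyapLower f x = a ∧ lyapUpper f x = b}

/-- The set `𝓛̂(α,β)` of points of the Julia set with `χ̲ ≤ β`, `χ̄ ≥ α` and `χ̄ > 0`. -/
def levelHat (f : RSphere → RSphere) (α β : ℝ) : Set RSphere :=
  {x | x ∈ juliaSet f ∧ lyapLower f x ≤ (β : EReal) ∧ (α : EReal) ≤ lyapUpper f x ∧
    0 < lyapUpper f x}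

/-- Birkhoff sum `S_m φ = φ + φ∘g + ⋯ + φ∘g^{m-1}`. -/
def birkhoff (g : RSphere → RSphere) (φ : RSphere → ℝ) (m : ℕ) (x : RSphere) : ℝ :=
  ∑ k ∈ Finset.range m, φ (g^[k] x)

/-- An `(m,ε)`-separated finite subset of `Λ` for the map `g`. -/
def IsSepSet (g : RSphere → RSphere) (Λ : Set RSphere) (m : ℕ) (ε : ℝ)
    (E : Finset RSphere) : Prop :=
  ↑E ⊆ Λ ∧ ∀ x ∈ E, ∀ y ∈ E, x ≠ y → ∃ k < m, ε ≤ dist (g^[k] x) (g^[k] y)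

/-- Topological pressure of the potential `φ` for `g` restricted to `Λ`,
defined à la Bowen via `(m,ε)`-separated sets. -/
def pressureOn (g : RSphere → RSphere) (Λ : Set RSphere) (φ : RSphere → ℝ) : ℝ :=
  ⨆ ε : {ε : ℝ // 0 < ε}, limsup (fun m : ℕ =>
    Real.log (⨆ E : {E : Finset RSphere // IsSepSet g Λ m ε.1 E},
      ∑ x ∈ E.1, Real.exp (birkhoff g φ m x)) / m) atTop

/-- `g` is uniformly expanding on `Λ`: `|(gᵐ)'(x)| ≥ c λᵐ` for some `c > 0`, `λ > 1`. -/
def ExpandingOn (g : RSphere → RSphere) (Λ : Set RSphere) : Prop :=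
  ∃ c > (0 : ℝ), ∃ l : ℝ, 1 < l ∧ ∀ x ∈ Λ, ∀ m : ℕ, 1 ≤ m → c * l ^ m ≤ sphDeriv (g^[m]) x

/-- `Λ` is a repeller for `g`: a compact invariant isolated set. -/
def IsRepeller (g : RSphere → RSphere) (Λ : Set RSphere) : Prop :=
  IsCompact Λ ∧ g '' Λ = Λ ∧
    ∃ U : Set RSphere, IsOpen U ∧ Λ ⊆ U ∧ ∀ x, (∀ m : ℕ, g^[m] x ∈ U) → x ∈ Λ

/-- Topological transitivity of `g` on `Λ`. -/
def TopTransOn (g : RSphere → RSphere) (Λ : Set RSphere) : Prop :=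
  ∀ U V : Set RSphere, IsOpen U → IsOpen V → (U ∩ Λ).Nonempty → (V ∩ Λ).Nonempty →
    ∃ m : ℕ, (g^[m] '' (U ∩ Λ) ∩ V).Nonempty

/-- The topological pressure of `φ` with respect to `f` on its Julia set, given by
the supremum of the pressures on compact invariant uniformly expanding subsets of `J`. -/
def pressureTop (f : RSphere → RSphere) (φ : RSphere → ℝ) : ℝ :=
  ⨆ L : {L : Set RSphere //
      L.Nonempty ∧ L ⊆ juliaSet f ∧ IsCompact L ∧ f '' L = L ∧ ExpandingOn f L},
    pressureOn f L.1 φ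

/-- The pressure function `d ↦ P(φ_d)` where `φ_d = -d log|f'|`. -/
def pressFamily (f : RSphere → RSphere) (d : ℝ) : ℝ :=
  pressureTop f fun x => -d * Real.log (sphDeriv f x)

/-- `F(α) = α⁻¹ inf_d (Q(d) + dα)` associated with a pressure function `Q` (for `α ≠ 0`). -/
def specF (Q : ℝ → ℝ) (α : ℝ) : EReal :=
  ((α⁻¹ : ℝ) : EReal) * ⨅ d : ℝ, ((Q d + d * α : ℝ) : EReal)

/-- `F(0) = lim_{α → 0⁺} F(α)`. -/
def specF0 (Q : ℝ → ℝ) : EReal := limsup (fun α : ℝ => specF Q α) (𝓝[>] (0 : ℝ))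

/-- The full spectrum function `F` associated with a pressure function `Q`. -/
def specFext (Q : ℝ → ℝ) (α : ℝ) : EReal := if α = 0 then specF0 Q else specF Q α

/-- The Lyapunov spectrum function `F` of `f`. -/
def Ffun (f : RSphere → RSphere) (α : ℝ) : EReal := specFext (pressFamily f) α

/-- `α⁻ = lim_{d → +∞} -Q(d)/d` for a pressure function `Q`. -/
def alphaMinusOf (Q : ℝ → ℝ) : ℝ := limsup (fun d : ℝ => -Q d / d) atTop

/-- `α⁺ = lim_{d → -∞} -Q(d)/d` for a pressure function `Q`. -/
def alphaPlusOf (Q : ℝ → ℝ) : ℝ := limsup (fun d : ℝ => -Q d / d) atBot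

/-- `α⁻` for the map `f`. -/
def alphaMinus (f : RSphere → RSphere) : ℝ := alphaMinusOf (pressFamily f)

/-- `α⁺` for the map `f`. -/
def alphaPlus (f : RSphere → RSphere) : ℝ := alphaPlusOf (pressFamily f)

/-- The Lyapunov exponent `χ(μ) = ∫ log|g'| dμ` of a measure. -/
def lyapMeas (g : RSphere → RSphere) (μ : Measure RSphere) : ℝ :=
  ∫ x, Real.log (sphDeriv g x) ∂μ

/-- `α⁻` as the infimum of Lyapunov exponents of invariant probability measures on `J`. -/
def alphaMinusMeas (f : RSphere → RSphere) : ℝ :=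
  sInf {r : ℝ | ∃ μ : Measure RSphere, IsProbabilityMeasure μ ∧ MeasurePreserving f μ μ ∧
    μ (juliaSet f)ᶜ = 0 ∧ r = lyapMeas f μ}

/-- `α⁺` as the supremum of Lyapunov exponents of invariant probability measures on `J`. -/
def alphaPlusMeas (f : RSphere → RSphere) : ℝ :=
  sSup {r : ℝ | ∃ μ : Measure RSphere, IsProbabilityMeasure μ ∧ MeasurePreserving f μ μ ∧
    μ (juliaSet f)ᶜ = 0 ∧ r = lyapMeas f μ}

/-- The maximal distortion `sup_{x,y ∈ Z} |g'(x)|/|g'(y)|` of `g` on `Z`. -/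
def distortionOn (g : RSphere → RSphere) (Z : Set RSphere) : ℝ :=
  sSup {r : ℝ | ∃ x ∈ Z, ∃ y ∈ Z, r = sphDeriv g x / sphDeriv g y}

/-- Conical points. -/
def IsConical (f : RSphere → RSphere) (x : RSphere) : Prop :=
  ∃ r : ℝ, 0 < r ∧ ∃ K : ℝ, ∃ n : ℕ → ℕ, StrictMono n ∧ ∃ U : ℕ → Set RSphere,
    ∀ i, U i ∈ 𝓝 x ∧ ball (f^[n i] x) r ⊆ f^[n i] '' U i ∧ distortionOn (f^[n i]) (U i) ≤ K

/-- A non-immediately postcritical point: there is a backward orbit through it that is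
dense in the Julia set and avoids the critical points. -/
def NonImmPostCrit (f : RSphere → RSphere) (x : RSphere) : Prop :=
  ∃ b : ℕ → RSphere, b 0 = x ∧ (∀ n, f (b (n + 1)) = b n) ∧
    juliaSet f ⊆ closure (Set.range b) ∧ ∀ n, b n ∉ critSet f

/-- `f` is exceptional: there is a finite nonempty set `Σ_f` with `f⁻¹(Σ_f) \ Crit = Σ_f`. -/
def IsExceptional (f : RSphere → RSphere) : Prop :=
  ∃ S : Set RSphere, S.Finite ∧ S.Nonempty ∧ f ⁻¹' S \ critSet f = S

/-- The largest exceptional set `Σ` of `f`. -/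
def maxExceptional (f : RSphere → RSphere) : Set RSphere :=
  ⋃₀ {S : Set RSphere | S.Finite ∧ S.Nonempty ∧ f ⁻¹' S \ critSet f = S}

/-- `0` not being exceptional, or having exceptional set away from the Julia set. -/
def GoodExc (f : RSphere → RSphere) : Prop :=
  ¬ IsExceptional f ∨ maxExceptional f ∩ juliaSet f = ∅

/-- A parabolic periodic point at a finite point `z`: a periodic point whose multiplier
is a root of unity. -/
def IsParabolicFix (g : RSphere → RSphere) (z : ℂ) : Prop :=
  ∃ m : ℕ, 0 < m ∧ g^[m] (RSphere.ofC z) = RSphere.ofC z ∧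
    ∃ lam : ℂ, (∃ k : ℕ, 0 < k ∧ lam ^ k = 1) ∧
      HasDerivAt (fun w => RSphere.toC (g^[m] (RSphere.ofC w))) lam z

/-- A parabolic periodic point of `f` (at a finite point, or at `∞` read in the chart `1/z`). -/
def IsParabolic (f : RSphere → RSphere) (x : RSphere) : Prop :=
  (∃ z : ℂ, x = RSphere.ofC z ∧ IsParabolicFix f z) ∨
  (x = RSphere.infty ∧ IsParabolicFix (fun y => RSphere.inv (f (RSphere.inv y))) 0)

/-- A recurrent point. -/
def IsRecurrentPt (f : RSphere → RSphere) (x : RSphere) : Prop :=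
  ∃ n : ℕ → ℕ, StrictMono n ∧ Tendsto (fun i => f^[n i] x) atTop (𝓝 x)

/-! ### Graph directed systems and expanding Cantor repellers -/

/-- A graph directed system (GDS) satisfying the strong separation condition with
respect to the map `g`. -/
structure GDS (g : RSphere → RSphere) where
  /-- number of vertices -/
  n : ℕ
  npos : 0 < n
  /-- the open domains -/
  U : Fin n → Set RSphere
  /-- the admissible edges -/
  edge : Fin n → Fin n → Prop
  /-- the inverse branches -/
  br : Fin n → Fin n → RSphere → RSphere
  isOpen : ∀ k, IsOpen (U k)
  isConnected : ∀ k, IsConnected (U k)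
  disjClosure : ∀ k l, k ≠ l → closure (U k) ∩ closure (U l) = ∅
  mapsTo : ∀ k l, edge k l → Set.MapsTo (br k l) (closure (U l)) (U k)
  isBranch : ∀ k l, edge k l → ∀ x ∈ closure (U l), g (br k l x) = x
  bddDistortion : ∃ C : ℝ, ∀ k l, edge k l → distortionOn (br k l) (closure (U l)) ≤ C

/-- The cylinder sets of depth `m` of a GDS. -/
def gdsCyl {g : RSphere → RSphere} (G : GDS g) : ℕ → Set RSphere
  | 0 => ⋃ k, G.U k
  | m + 1 => ⋃ (k : Fin G.n) (l : Fin G.n) (_ : G.edge k l),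
      G.br k l '' (gdsCyl G m ∩ G.U l)

/-- The limit set of a GDS. -/
def gdsLimit {g : RSphere → RSphere} (G : GDS g) : Set RSphere := ⋂ m, gdsCyl G m

/-- An expanding Cantor repeller (ECR) for `g`: a uniformly expanding repeller which is
the limit set of a GDS satisfying the strong separation condition, with `g(Λ) = Λ`. -/
def IsECR (g : RSphere → RSphere) (Λ : Set RSphere) : Prop :=
  ExpandingOn g Λ ∧ IsRepeller g Λ ∧ ∃ G : GDS g, gdsLimit G = Λ

/-- A Cantor set: compact, perfect and totally disconnected. -/
def IsCantorSet (s : Set RSphere) : Prop :=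
  IsCompact s ∧ Perfect s ∧ IsTotallyDisconnected s

/-! ### Entropy, equilibrium states and dimensions -/

/-- The entropy of a countable partition (given by the fibers of `p`). -/
def partEntropy {ι : Type} [Countable ι] (μ : Measure RSphere) (p : RSphere → ι) : ℝ :=
  ∑' i : ι, Real.negMulLog (μ (p ⁻¹' {i})).toReal

/-- Measure-theoretic (Kolmogorov–Sinai) entropy of `T` with respect to `μ`:
supremum over finite measurable partitions of the exponential growth rate of the
entropies of the dynamical refinements. -/
def entropyOf (T : RSphere → RSphere) (μ : Measure RSphere) : ℝ :=
  ⨆ p : {p : RSphere → ℕ // Measurable p ∧ (Set.range p).Finite},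
    ⨅ n : {n : ℕ // 0 < n},
      partEntropy μ (fun x => fun k : Fin n.1 => p.1 (T^[(k : ℕ)] x)) / (n.1 : ℝ)

/-- An equilibrium state for the potential `φ` with respect to `g` restricted to `Λ`. -/
def IsEquilibrium (g : RSphere → RSphere) (Λ : Set RSphere) (φ : RSphere → ℝ)
    (μ : Measure RSphere) : Prop :=
  IsProbabilityMeasure μ ∧ μ Λᶜ = 0 ∧ MeasurePreserving g μ μ ∧
    entropyOf g μ + ∫ x, φ x ∂μ = pressureOn g Λ φ

/-- The Hausdorff dimension of a measure: the infimum of the Hausdorff dimensions of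
sets of full measure. -/
def dimHMeasure (μ : Measure RSphere) : ℝ≥0∞ :=
  ⨅ (s : Set RSphere) (_ : μ sᶜ = 0), dimH s

/-- The minimal number of `ε`-balls needed to cover `s`. -/
def coverNum (s : Set RSphere) (ε : ℝ) : ℕ :=
  sInf {n : ℕ | ∃ t : Finset RSphere, t.card = n ∧ s ⊆ ⋃ x ∈ t, ball x ε}

/-- The upper box-counting dimension. -/
def upperBoxDim (s : Set RSphere) : ℝ :=
  limsup (fun n : ℕ => Real.log (coverNum s (1 / n)) / Real.log n) atTop

/-- The packing dimension, via countable covers and upper box dimensions. -/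
def dimP (s : Set RSphere) : ℝ≥0∞ :=
  ⨅ c : {c : ℕ → Set RSphere // s ⊆ ⋃ n, c n},
    ⨆ n : ℕ, ENNReal.ofReal (upperBoxDim (c.1 n))

/-- The connected component of `y` in `g⁻¹(B)`: the pull-back of `B` along the inverse
branch of `g` sending (the image of) `y` to `y`. -/
def invBranchSet (g : RSphere → RSphere) (B : Set RSphere) (y : RSphere) : Set RSphere :=
  connectedComponentIn (g ⁻¹' B) y

end


/-! ### Locally expanding maps of compact metric spaces -/

/-- The map `f` expands short distances near `X` by the factor `κ`, and near `X` it has local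
inverses of uniform size. -/
structure LocallyExpanding {S : Type*} [MetricSpace S] (f : S → S) (X : Set S) (κ r : ℝ) :
    Prop where
  one_lt : 1 < κ
  r_pos : 0 < r
  expand : ∀ u ∈ thickening r X, ∀ v, dist u v < r → κ * dist u v ≤ dist (f u) (f v)
  lift : ∀ u ∈ thickening r X, ∀ v, dist (f u) v < r → ∃ w, f w = v ∧ κ * dist u w ≤ dist (f u) v

namespace LocallyExpanding

variable {S : Type*} [MetricSpace S] {f : S → S} {X Y : Set S} {κ r r' : ℝ}

lemma kappa_pos (h : LocallyExpanding f X κ r) : 0 < κ := zero_lt_one.trans h.one_lt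

lemma mono (h : LocallyExpanding f X κ r) (hr' : 0 < r') (hr : r' ≤ r)
    (hY : thickening r' Y ⊆ thickening r X) : LocallyExpanding f Y κ r' where
  one_lt := h.one_lt
  r_pos := hr'
  expand u hu v huv := h.expand u (hY hu) v (huv.trans_le hr)
  lift u hu v huv := h.lift u (hY hu) v (huv.trans_le hr)

lemma mono_subset (h : LocallyExpanding f X κ r) (hY : Y ⊆ X) : LocallyExpanding f Y κ r :=
  h.mono h.r_pos le_rfl (thickening_subset_of_subset _ hY)

/-- Points with orbits near `X` that stay close for `n` steps are exponentially close. -/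
lemma pow_mul_dist_le (h : LocallyExpanding f X κ r) {u v : S} (n : ℕ)
    (hu : ∀ j < n, f^[j] u ∈ thickening r X) (hd : ∀ j < n, dist (f^[j] u) (f^[j] v) < r) :
    κ ^ n * dist u v ≤ dist (f^[n] u) (f^[n] v) := by
  induction n with
  | zero => simp
  | succ n ih =>
    have h1 := ih (fun j hj => hu j (by omega)) (fun j hj => hd j (by omega))
    have h2 := h.expand _ (hu n (by omega)) _ (hd n (by omega))
    rw [Function.iterate_succ_apply', Function.iterate_succ_apply', pow_succ']
    have := mul_le_mul_of_nonneg_left h1 h.kappa_pos.le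
    linarith [mul_assoc κ (κ ^ n) (dist u v)]

end LocallyExpanding

/-! ### Totally disconnected compact sets -/

/-- A small neighbourhood of a totally disconnected compact set can be coloured so that points of
the same colour are close and the colouring is uniformly locally constant. -/
lemma IsTotallyDisconnected.exists_coloring {S : Type*} [MetricSpace S] {X : Set S}
    (hX : IsCompact X) (htd : IsTotallyDisconnected X) {δ : ℝ} (hδ : 0 < δ) :
    ∃ γ > 0, ∃ c : S → Set X,
      (∀ u ∈ thickening γ X, ∀ v ∈ thickening γ X, dist u v < γ → c u = c v) ∧
      (∀ u ∈ thickening γ X, ∀ v ∈ thickening γ X, c u = c v → dist u v < δ) := by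
  rcases X.eq_empty_or_nonempty with rfl | hne
  · exact ⟨1, one_pos, fun _ => ∅, by simp, by simp⟩
  have : Nonempty X := hne.to_subtype
  have : CompactSpace X := isCompact_iff_compactSpace.mp hX
  have : TotallyDisconnectedSpace X := totallyDisconnectedSpace_subtype_iff.mpr htd
  have hV : ∀ x : X, ∃ V : Set X, IsClopen V ∧ x ∈ V ∧ V ⊆ ball x (δ / 6) := fun x =>
    compact_exists_isClopen_in_isOpen isOpen_ball (mem_ball_self (by linarith))
  choose V hVc hVx hVb using hV
  obtain ⟨t, ht⟩ := isCompact_univ.elim_finite_subcover V (fun x => (hVc x).isOpen)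
    (fun x _ => mem_iUnion.mpr ⟨x, hVx x⟩)
  let c₀ : X → Set X := fun x => {i | i ∈ t ∧ x ∈ V i}
  have hc₀ : IsLocallyConstant c₀ := by
    rw [IsLocallyConstant.iff_eventually_eq]
    intro x
    have : ∀ᶠ y in 𝓝 x, ∀ i ∈ t, (y ∈ V i ↔ x ∈ V i) := by
      rw [Filter.eventually_all_finset]
      intro i _
      by_cases hx : x ∈ V i
      · filter_upwards [(hVc i).isOpen.mem_nhds hx] with y hy
        simp [hx, hy]
      · filter_upwards [(hVc i).compl.isOpen.mem_nhds hx] with y hy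
        simp only [hx, iff_false]; exact hy
    filter_upwards [this] with y hy
    ext i
    simp only [c₀, mem_ofPred_eq]
    exact and_congr_right (hy i)
  obtain ⟨γ₀, hγ₀, hball⟩ := lebesgue_number_lemma_of_metric (s := (univ : Set X))
    (c := fun a : Set X => c₀ ⁻¹' {a}) isCompact_univ (fun a => hc₀ _)
    (fun x _ => mem_iUnion.mpr ⟨c₀ x, rfl⟩)
  have hc1 : ∀ x y : X, dist x y < γ₀ → c₀ x = c₀ y := by
    intro x y hxy
    obtain ⟨a, ha⟩ := hball x (mem_univ _)
    have hx : c₀ x = a := ha (mem_ball_self hγ₀)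
    have hy : c₀ y = a := ha (by rwa [mem_ball, dist_comm])
    rw [hx, hy]
  have hc2 : ∀ x y : X, c₀ x = c₀ y → dist x y < δ / 3 := by
    intro x y hxy
    obtain ⟨i, hi, hxi⟩ := mem_iUnion₂.mp (ht (mem_univ x))
    have : i ∈ c₀ y := hxy ▸ (⟨hi, hxi⟩ : i ∈ c₀ x)
    have h1 := mem_ball.mp (hVb i hxi)
    have h2 := mem_ball'.mp (hVb i this.2)
    linarith [dist_triangle x i y]
  set γ := min (γ₀ / 3) (δ / 3) with hγ
  have hγpos : 0 < γ := lt_min (by linarith) (by linarith)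
  have hγ1 : γ ≤ γ₀ / 3 := min_le_left _ _
  have hγ2 : γ ≤ δ / 3 := min_le_right _ _
  have hn : ∀ u ∈ thickening γ X, ∃ x : X, dist u x < γ := by
    intro u hu
    obtain ⟨x, hx, hd⟩ := mem_thickening_iff.mp hu
    exact ⟨⟨x, hx⟩, hd⟩
  choose! nn hnn using hn
  refine ⟨γ, hγpos, fun u => c₀ (nn u), ?_, ?_⟩
  · intro u hu v hv huv
    apply hc1
    have h1 := hnn u hu
    have h2 := hnn v hv
    rw [Subtype.dist_eq]
    rw [dist_comm] at h1
    linarith [dist_triangle4 (nn u : S) u v (nn v)]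
  · intro u hu v hv huv
    have h0 := hc2 _ _ huv
    have h1 := hnn u hu
    have h2 := hnn v hv
    rw [Subtype.dist_eq] at h0
    rw [dist_comm] at h2
    linarith [dist_triangle4 u (nn u : S) (nn v) v]

/-- A map which is locally constant along a preconnected set is constant on it. -/
lemma IsPreconnected.eq_of_forall_dist_lt {S ι : Type*} [MetricSpace S] {C : Set S}
    (hC : IsPreconnected C) {g : S → ι} {γ : ℝ} (hγ : 0 < γ)
    (hg : ∀ u ∈ C, ∀ v ∈ C, dist u v < γ → g u = g v) {u v : S} (hu : u ∈ C) (hv : v ∈ C) :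
    g u = g v := by
  refine hC.induction₂ (fun x y => g x = g y) ?_ ?_ ?_ hu hv
  · intro x hx
    filter_upwards [self_mem_nhdsWithin, mem_nhdsWithin_of_mem_nhds (ball_mem_nhds x hγ)] with y hy hd
    exact hg x hx y hy (by rwa [dist_comm])
  · intro x y z _ _ _ h1 h2
    exact h1.trans h2
  · intro x y _ _ h
    exact h.symm

/-- The union of two disjoint closed totally disconnected sets is totally disconnected. -/
lemma IsTotallyDisconnected.union_of_isClosed {S : Type*} [TopologicalSpace S] {A B : Set S}
    (hA : IsTotallyDisconnected A) (hB : IsTotallyDisconnected B) (hAc : IsClosed A)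
    (hBc : IsClosed B) (hd : Disjoint A B) : IsTotallyDisconnected (A ∪ B) := by
  intro t ht hpre
  rcases isPreconnected_iff_subset_of_disjoint_closed.mp hpre A B hAc hBc ht
    (by rw [hd.inter_eq, inter_empty]) with h | h
  · exact hA t h hpre
  · exact hB t h hpre

/-- A compact invariant expanding set is totally disconnected if it is covered by finitely many
disjoint open sets between which the map is injective. -/
lemma LocallyExpanding.isTotallyDisconnected {S : Type*} [MetricSpace S] {f : S → S}
    (hf : Continuous f) {Λ : Set S} {κ r : ℝ} (h : LocallyExpanding f Λ κ r) (hΛ : IsCompact Λ)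
    (hmaps : MapsTo f Λ Λ) {n : ℕ} (U : Fin n → Set S) (hUo : ∀ k, IsOpen (U k))
    (hUd : ∀ k l, k ≠ l → Disjoint (U k) (U l)) (hcov : Λ ⊆ ⋃ k, U k)
    (hinj : ∀ k l, InjOn f (Λ ∩ U k ∩ f ⁻¹' U l)) : IsTotallyDisconnected Λ := by
  -- the index of the domain containing a point of `Λ`
  have hidx : ∀ x ∈ Λ, ∃ k, x ∈ U k := fun x hx => mem_iUnion.mp (hcov hx)
  obtain ⟨γ, hγ, hball⟩ := lebesgue_number_lemma_of_metric hΛ hUo hcov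
  have hsame : ∀ C ⊆ Λ, IsPreconnected C → ∀ u ∈ C, ∀ v ∈ C, ∀ k, u ∈ U k → v ∈ U k := by
    intro C hCΛ hC u hu v hv k hk
    have := hC.eq_of_forall_dist_lt (g := fun x => x ∈ U k) hγ (fun x hx y hy hxy => by
      obtain ⟨i, hi⟩ := hball x (hCΛ hx)
      have hxi : x ∈ U i := hi (mem_ball_self hγ)
      have hyi : y ∈ U i := hi (by rwa [mem_ball, dist_comm])
      by_cases hik : i = k
      · subst hik; simp [hxi, hyi]
      · have hd := hUd i k hik
        simp [Set.disjoint_left.mp hd hxi, Set.disjoint_left.mp hd hyi]) hu hv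
    exact this.mp hk
  -- uniform injectivity
  obtain ⟨β, hβ, hβinj⟩ : ∃ β > 0, ∀ u ∈ Λ, ∀ v ∈ Λ, ∀ k l, u ∈ U k → v ∈ U k → f u ∈ U l →
      f v ∈ U l → dist (f u) (f v) < β → dist u v < r := by
    by_contra! hcon
    choose u hu v hv k l hku hkv hlu hlv hd hr using fun m : ℕ =>
      hcon (1 / (m + 1 : ℝ)) (by positivity)
    obtain ⟨⟨a, b⟩, hab, φ, hφ, hlim⟩ := (hΛ.prod hΛ).tendsto_subseq
      (x := fun m => (u m, v m)) (fun m => ⟨hu m, hv m⟩)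
    have hua : Tendsto (fun m => u (φ m)) atTop (𝓝 a) := (continuous_fst.tendsto _).comp hlim
    have hvb : Tendsto (fun m => v (φ m)) atTop (𝓝 b) := (continuous_snd.tendsto _).comp hlim
    have hfu := (hf.tendsto a).comp hua
    have hfv := (hf.tendsto b).comp hvb
    have hfab : f a = f b := by
      have h0 : Tendsto (fun m => dist (f (u (φ m))) (f (v (φ m)))) atTop (𝓝 0) := by
        have h1 : Tendsto (fun m => 1 / ((φ m : ℕ) + 1 : ℝ)) atTop (𝓝 0) :=
          tendsto_one_div_add_atTop_nhds_zero_nat.comp hφ.tendsto_atTop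
        exact squeeze_zero (fun _ => dist_nonneg) (fun m => (hd (φ m)).le) h1
      exact dist_eq_zero.mp (tendsto_nhds_unique (hfu.dist hfv) h0)
    have hrab : r ≤ dist a b := ge_of_tendsto' (hua.dist hvb) (fun m => hr (φ m))
    obtain ⟨i, hi⟩ := hidx a hab.1
    obtain ⟨i', hi'⟩ := hidx b hab.2
    obtain ⟨j, hj⟩ := hidx (f a) (hmaps hab.1)
    have huniq : ∀ {x : S} {k l : Fin n}, x ∈ U k → x ∈ U l → k = l := fun {x k l} h1 h2 => by
      by_contra hkl
      exact Set.disjoint_left.mp (hUd k l hkl) h1 h2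
    have e1 := hua.eventually ((hUo i).mem_nhds hi)
    have e2 := hvb.eventually ((hUo i').mem_nhds hi')
    obtain ⟨m, h1, h2⟩ := (e1.and e2).exists
    have hii : i = i' := (huniq h1 (hku _)).trans (huniq (hkv _) h2)
    subst hii
    have : a = b := hinj i j ⟨⟨hab.1, hi⟩, hj⟩ ⟨⟨hab.2, hi'⟩, by rw [mem_preimage, ← hfab]; exact hj⟩ hfab
    rw [this, dist_self] at hrab
    exact absurd h.r_pos (not_lt.mpr hrab)
  -- a finite cover by small sets
  obtain ⟨t, -, ht, htcov⟩ := hΛ.finite_cover_balls (e := β / 2) (by linarith)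
  intro C hCΛ hC
  by_contra hnon
  rw [Set.not_subsingleton_iff] at hnon
  have hinf := hC.infinite_of_nontrivial hnon
  obtain ⟨F, hFC, hFcard⟩ := hinf.exists_subset_card_eq (ht.toFinset.card + 1)
  -- a lower bound for distances in `F`
  obtain ⟨e, he, hsep⟩ : ∃ e > 0, ∀ u ∈ F, ∀ v ∈ F, u ≠ v → e ≤ dist u v := by
    have hfin : (F.offDiag : Set (S × S)).Finite := Finset.finite_toSet _
    by_cases hne : F.offDiag.Nonempty
    · obtain ⟨p, hp, hmin⟩ := F.offDiag.exists_min_image (fun p => dist p.1 p.2) hne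
      rw [Finset.mem_offDiag] at hp
      exact ⟨dist p.1 p.2, dist_pos.mpr hp.2.2, fun u hu v hv huv =>
        hmin (u, v) (Finset.mem_offDiag.mpr ⟨hu, hv, huv⟩)⟩
    · refine ⟨1, one_pos, fun u hu v hv huv => absurd ?_ hne⟩
      exact ⟨(u, v), Finset.mem_offDiag.mpr ⟨hu, hv, huv⟩⟩
  have hiter : ∀ i, MapsTo f^[i] Λ Λ := fun i => hmaps.iterate i
  have hitpre : ∀ i, IsPreconnected (f^[i] '' C) := fun i =>
    hC.image _ (hf.iterate i).continuousOn
  have hitsub : ∀ i, f^[i] '' C ⊆ Λ := fun i => by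
    rintro _ ⟨x, hx, rfl⟩; exact hiter i (hCΛ hx)
  have hpull : ∀ u ∈ C, ∀ v ∈ C, ∀ i, dist (f^[i] u) (f^[i] v) < β →
      κ ^ i * dist u v ≤ dist (f^[i] u) (f^[i] v) := by
    intro u hu v hv i
    induction i with
    | zero => simp
    | succ i ih =>
      intro hd
      rw [Function.iterate_succ_apply', Function.iterate_succ_apply'] at hd ⊢
      obtain ⟨k, hk⟩ := hidx _ (hiter i (hCΛ hu))
      obtain ⟨l, hl⟩ := hidx _ (hiter (i + 1) (hCΛ hu))
      have hk' := hsame _ (hitsub i) (hitpre i) _ (mem_image_of_mem _ hu) _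
        (mem_image_of_mem _ hv) k hk
      have hl' := hsame _ (hitsub (i + 1)) (hitpre (i + 1)) _ (mem_image_of_mem _ hu) _
        (mem_image_of_mem _ hv) l hl
      rw [Function.iterate_succ_apply'] at hl hl'
      have h1 := hβinj _ (hiter i (hCΛ hu)) _ (hiter i (hCΛ hv)) k l hk hk' hl hl' hd
      have h2 := h.expand _ (self_subset_thickening h.r_pos _ (hiter i (hCΛ hu))) _ h1
      have h3 : dist (f^[i] u) (f^[i] v) < β := by
        have := h.one_lt
        nlinarith [dist_nonneg (x := f^[i] u) (y := f^[i] v)]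
      have h4 := mul_le_mul_of_nonneg_left (ih h3) h.kappa_pos.le
      rw [pow_succ']
      linarith [mul_assoc κ (κ ^ i) (dist u v)]
  obtain ⟨i, hi⟩ := pow_unbounded_of_one_lt (β / e) h.one_lt
  rw [div_lt_iff₀ he] at hi
  have hmem : ∀ u ∈ F, ∃ y ∈ ht.toFinset, f^[i] u ∈ ball y (β / 2) := by
    intro u hu
    obtain ⟨y, hy, hd⟩ := mem_iUnion₂.mp (htcov (hiter i (hCΛ (hFC hu))))
    exact ⟨y, ht.mem_toFinset.mpr hy, hd⟩
  choose! y hy hyd using hmem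
  obtain ⟨u, hu, v, hv, huv, hyuv⟩ := Finset.exists_ne_map_eq_of_card_lt_of_maps_to
    (by omega : ht.toFinset.card < F.card) hy
  have hd : dist (f^[i] u) (f^[i] v) < β := by
    have h1 := mem_ball.mp (hyd u hu)
    have h2 := mem_ball'.mp (hyd v hv)
    rw [← hyuv] at h2
    linarith [dist_triangle (f^[i] u) (y u) (f^[i] v)]
  have h1 := hpull u (hFC hu) v (hFC hv) i hd
  have h2 := hsep u hu v hv huv
  have := mul_le_mul_of_nonneg_left h2 (pow_pos h.kappa_pos i).le
  linarith

/-! ### Enlarging an expanding set to an isolated one -/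

/-- Any two points of `X` are joined by pseudo-orbits in `X` with arbitrarily small jumps. -/
def ChainTransitiveOn {S : Type*} [TopologicalSpace S] (f : S → S) (X : Set S) : Prop :=
  ∀ D ∈ 𝓝ˢ (diagonal S), ∀ a ∈ X, ∀ b ∈ X,
    Relation.ReflTransGen (fun u v => u ∈ X ∧ v ∈ X ∧ (f u, v) ∈ D) a b

/-- A totally disconnected compact set on which `f` is expanding is contained in an isolated
one, as close to it as desired; it is topologically transitive if the original set is
chain transitive. -/
theorem LocallyExpanding.exists_isolated {S : Type*} [MetricSpace S] [CompactSpace S] {f : S → S}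
    (hf : Continuous f) {X : Set S} {κ r : ℝ} (h : LocallyExpanding f X κ r) (hX : IsCompact X)
    (hmaps : MapsTo f X X) (hsurj : f '' X = X) (htd : IsTotallyDisconnected X)
    {O : Set S} (hO : IsOpen O) (hXO : X ⊆ O) :
    ∃ Λ W : Set S, X ⊆ Λ ∧ IsCompact Λ ∧ f '' Λ = Λ ∧ IsOpen W ∧ Λ ⊆ W ∧ W ⊆ O ∧
      (∀ z, (∀ i, f^[i] z ∈ W) → z ∈ Λ) ∧ IsTotallyDisconnected Λ ∧
      (ChainTransitiveOn f X → ∀ U V : Set S, IsOpen U → IsOpen V → (U ∩ Λ).Nonempty →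
        (V ∩ Λ).Nonempty → ∃ m : ℕ, (f^[m] '' (U ∩ Λ) ∩ V).Nonempty) := by
  have hκ := h.one_lt
  have hκ0 := h.kappa_pos
  obtain ⟨δ₀, hδ₀, hδ₀O⟩ := hX.exists_thickening_subset_open hO hXO
  obtain ⟨γ₀, hγ₀, c, hc1', hc2'⟩ := htd.exists_coloring hX h.r_pos
  set γ := min γ₀ (min r δ₀) with hγdef
  have hγ : 0 < γ := lt_min hγ₀ (lt_min h.r_pos hδ₀)
  have hγ1 : γ ≤ γ₀ := min_le_left _ _
  have hγr : γ ≤ r := (min_le_right _ _).trans (min_le_left _ _)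
  have hγO : γ ≤ δ₀ := (min_le_right _ _).trans (min_le_right _ _)
  set T := thickening γ X with hT
  have hTo : IsOpen T := isOpen_thickening
  have hTr : T ⊆ thickening r X := thickening_mono hγr _
  have hTγ : T ⊆ thickening γ₀ X := thickening_mono hγ1 _
  have hc1 : ∀ u ∈ T, ∀ v ∈ T, dist u v < γ → c u = c v := fun u hu v hv huv =>
    hc1' u (hTγ hu) v (hTγ hv) (huv.trans_le hγ1)
  have hc2 : ∀ u ∈ T, ∀ v ∈ T, c u = c v → dist u v < r := fun u hu v hv =>
    hc2' u (hTγ hu) v (hTγ hv)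
  have hXT : X ⊆ T := self_subset_thickening hγ _
  obtain ⟨n, hn⟩ : ∃ n : ℕ, r < κ ^ n * (γ / 2) := by
    obtain ⟨n, hn⟩ := pow_unbounded_of_one_lt (r / (γ / 2)) hκ
    exact ⟨n, (div_lt_iff₀ (by linarith)).mp hn⟩
  have hXi : ∀ i, ∀ x ∈ X, f^[i] x ∈ X := fun i x hx => hmaps.iterate i hx
  have hcf : ∀ i, Continuous f^[i] := fun i => hf.iterate i
  -- points following the same colours for `n + 1` steps are close
  have hclose : ∀ y z, (∀ j ≤ n, f^[j] y ∈ T) → (∀ j ≤ n, f^[j] z ∈ T) →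
      (∀ j ≤ n, c (f^[j] y) = c (f^[j] z)) → dist y z < γ / 2 := by
    intro y z hy hz hyz
    have h1 := h.pow_mul_dist_le (u := y) (v := z) n (fun j hj => hTr (hy j hj.le))
      (fun j hj => hc2 _ (hy j hj.le) _ (hz j hj.le) (hyz j hj.le))
    have h2 := hc2 _ (hy n le_rfl) _ (hz n le_rfl) (hyz n le_rfl)
    have h3 : κ ^ n * dist y z < κ ^ n * (γ / 2) := by linarith
    exact lt_of_mul_lt_mul_left h3 (by positivity)
  let W : Set S := {z | ∃ x ∈ X, ∀ j ≤ n, f^[j] z ∈ T ∧ c (f^[j] z) = c (f^[j] x)}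
  let Λ : Set S := {z | ∀ i, f^[i] z ∈ W}
  have hWT2 : W ⊆ thickening (γ / 2) X := by
    rintro z ⟨x, hx, hz⟩
    exact mem_thickening_iff.mpr ⟨x, hx, hclose z x (fun j hj => (hz j hj).1)
      (fun j _ => hXT (hXi j x hx)) (fun j hj => (hz j hj).2)⟩
  have hT2 : thickening (γ / 2) X ⊆ T := thickening_mono (by linarith) _
  have hWT : W ⊆ T := hWT2.trans hT2
  have hΛW : Λ ⊆ W := fun z hz => hz 0
  have hΛi : ∀ i, ∀ z ∈ Λ, f^[i] z ∈ Λ := by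
    intro i z hz j
    rw [← Function.iterate_add_apply]
    exact hz _
  have hXΛ : X ⊆ Λ := fun x hx i => ⟨f^[i] x, hXi i x hx, fun j _ => ⟨hXT (hXi j _ (hXi i x hx)), rfl⟩⟩
  have hΛT : ∀ i, ∀ z ∈ Λ, f^[i] z ∈ T := fun i z hz => hWT (hz i)
  have hWo : IsOpen W := by
    rw [isOpen_iff_mem_nhds]
    rintro z ⟨x, hx, hz⟩
    have : ∀ᶠ z' in 𝓝 z, ∀ j ∈ Finset.range (n + 1), f^[j] z' ∈ T ∧ dist (f^[j] z') (f^[j] z) < γ := by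
      rw [Filter.eventually_all_finset]
      intro j hj
      have hj' : j ≤ n := by simpa [Nat.lt_succ_iff] using hj
      exact ((hcf j).continuousAt.eventually (hTo.mem_nhds (hz j hj').1)).and
        ((hcf j).continuousAt.eventually (ball_mem_nhds _ hγ))
    filter_upwards [this] with z' hz'
    refine ⟨x, hx, fun j hj => ?_⟩
    obtain ⟨h1, h2⟩ := hz' j (by simpa [Nat.lt_succ_iff] using hj)
    exact ⟨h1, (hc1 _ h1 _ (hz j hj).1 h2).trans (hz j hj).2⟩
  have hΛc : IsClosed Λ := by
    rw [← closure_subset_iff_isClosed]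
    intro z hz i
    have : ∀ᶠ z' in 𝓝 z, ∀ j ∈ Finset.range (n + 1), dist (f^[j] (f^[i] z')) (f^[j] (f^[i] z)) < γ / 2 := by
      rw [Filter.eventually_all_finset]
      intro j _
      exact ((hcf j).comp (hcf i)).continuousAt.eventually (ball_mem_nhds _ (by linarith))
    obtain ⟨z', hz', hzΛ⟩ := (mem_closure_iff_frequently.mp hz).and_eventually this |>.exists
    obtain ⟨x, hx, hxz⟩ := hz' i
    refine ⟨x, hx, fun j hj => ?_⟩
    have h1 := hzΛ j (by simpa [Nat.lt_succ_iff] using hj)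
    have h2 : f^[j] (f^[i] z') ∈ thickening (γ / 2) X := hWT2 (hΛi i z' hz' j)
    obtain ⟨x', hx', hd⟩ := mem_thickening_iff.mp h2
    have h3 : f^[j] (f^[i] z) ∈ T := by
      refine mem_thickening_iff.mpr ⟨x', hx', ?_⟩
      rw [dist_comm] at h1
      linarith [dist_triangle (f^[j] (f^[i] z)) (f^[j] (f^[i] z')) x']
    exact ⟨h3, (hc1 _ h3 _ (hT2 h2) (by rw [dist_comm]; linarith)).trans (hxz j hj).2⟩
  -- lifting along orbits
  have hpull : ∀ y ∈ Λ, ∀ z ∈ Λ, (∀ j ≤ n, c (f^[j] (f y)) = c (f^[j] z)) →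
      ∃ w ∈ Λ, f w = z ∧ (∀ j ≤ n, c (f^[j] y) = c (f^[j] w)) ∧ κ * dist y w ≤ dist (f y) z := by
    intro y hy z hz hyz
    have hfy : f y ∈ Λ := hΛi 1 y hy
    have hd0 := hclose (f y) z (fun j _ => hΛT j _ hfy) (fun j _ => hΛT j _ hz) hyz
    obtain ⟨w, hwz, hw⟩ := h.lift y (hTr (hΛT 0 y hy)) z (hd0.trans (by linarith))
    have hdyw : dist y w < γ / 2 := by
      have : 1 * dist y w ≤ κ * dist y w := mul_le_mul_of_nonneg_right hκ.le dist_nonneg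
      linarith
    have hwT : w ∈ T := by
      obtain ⟨x', hx', hd⟩ := mem_thickening_iff.mp (hWT2 (hΛW hy))
      refine mem_thickening_iff.mpr ⟨x', hx', ?_⟩
      rw [dist_comm] at hdyw
      linarith [dist_triangle w y x']
    have hsim : ∀ j ≤ n, c (f^[j] y) = c (f^[j] w) := by
      rintro (_ | j) hj
      · exact hc1 _ (hΛT 0 y hy) _ hwT (by simpa using hdyw.trans (by linarith))
      · rw [Function.iterate_succ_apply, Function.iterate_succ_apply, hwz]
        exact hyz j (by omega)
    refine ⟨w, ?_, hwz, hsim, hw⟩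
    rintro (_ | i)
    · obtain ⟨x, hx, hyx⟩ := hΛW hy
      refine ⟨x, hx, ?_⟩
      rintro j hj
      refine ⟨?_, (hsim j hj).symm.trans (hyx j hj).2⟩
      rcases j with _ | j
      · exact hwT
      · rw [Function.iterate_zero, id, Function.iterate_succ_apply, hwz]
        exact hΛT j z hz
    · rw [Function.iterate_succ_apply, hwz]
      exact hz i
  have hpulls : ∀ m, ∀ y ∈ Λ, ∀ z ∈ Λ, (∀ j ≤ n, c (f^[j] (f^[m] y)) = c (f^[j] z)) →
      ∃ w ∈ Λ, f^[m] w = z ∧ (∀ j ≤ n, c (f^[j] y) = c (f^[j] w)) ∧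
        κ ^ m * dist y w ≤ dist (f^[m] y) z := by
    intro m
    induction m with
    | zero => intro y hy z hz hyz; exact ⟨z, hz, rfl, hyz, by simp⟩
    | succ m ih =>
      intro y hy z hz hyz
      obtain ⟨w, hw, hwz, hsim, hd⟩ := ih (f y) (hΛi 1 y hy) z hz hyz
      obtain ⟨w', hw', hww, hsim', hd'⟩ := hpull y hy w hw hsim
      refine ⟨w', hw', by rw [Function.iterate_succ_apply, hww, hwz], hsim', ?_⟩
      have := mul_le_mul_of_nonneg_left hd' (pow_nonneg hκ0.le m)
      rw [Function.iterate_succ_apply, pow_succ, mul_assoc]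
      linarith
  have hsimW : ∀ z ∈ W, ∃ x ∈ X, ∀ j ≤ n, c (f^[j] z) = c (f^[j] x) := by
    rintro z ⟨x, hx, hz⟩
    exact ⟨x, hx, fun j hj => (hz j hj).2⟩
  refine ⟨Λ, W, hXΛ, hΛc.isCompact, ?_, hWo, hΛW, ?_, fun z hz => hz, ?_, ?_⟩
  · refine Subset.antisymm ?_ ?_
    · rintro _ ⟨z, hz, rfl⟩
      exact hΛi 1 z hz
    · intro z hz
      obtain ⟨x, hx, hzx⟩ := hsimW z (hΛW hz)
      obtain ⟨a, ha, rfl⟩ : x ∈ f '' X := hsurj.symm ▸ hx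
      obtain ⟨w, hw, hwz, -⟩ := hpull a (hXΛ ha) z hz (fun j hj => (hzx j hj).symm)
      exact ⟨w, hw, hwz⟩
  · exact hWT.trans ((thickening_mono hγO _).trans hδ₀O)
  · intro C hCΛ hC u hu v hv
    have hcol : ∀ i, c (f^[i] u) = c (f^[i] v) := by
      intro i
      have hCi : IsPreconnected (f^[i] '' C) := hC.image _ (hcf i).continuousOn
      refine hCi.eq_of_forall_dist_lt (g := c) hγ ?_ (mem_image_of_mem _ hu) (mem_image_of_mem _ hv)
      rintro _ ⟨a, ha, rfl⟩ _ ⟨b, hb, rfl⟩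
      exact hc1 _ (hΛT i a (hCΛ ha)) _ (hΛT i b (hCΛ hb))
    have hd : ∀ i, dist (f^[i] u) (f^[i] v) < r := fun i =>
      hc2 _ (hΛT i u (hCΛ hu)) _ (hΛT i v (hCΛ hv)) (hcol i)
    by_contra hne
    have hpos := dist_pos.mpr hne
    obtain ⟨m, hm⟩ := pow_unbounded_of_one_lt (r / dist u v) hκ
    rw [div_lt_iff₀ hpos] at hm
    have := h.pow_mul_dist_le (u := u) (v := v) m (fun j _ => hTr (hΛT j u (hCΛ hu)))
      (fun j _ => hd j)
    linarith [hd m]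
  · intro hchain U V hU _ ⟨z₁, hz₁U, hz₁⟩ ⟨z₂, hz₂V, hz₂⟩
    -- close points of `X` follow the same colours
    obtain ⟨D, hD, hDsim⟩ : ∃ D ∈ 𝓝ˢ (diagonal S), ∀ u ∈ X, ∀ v ∈ X, (u, v) ∈ D →
        ∀ j ≤ n, c (f^[j] u) = c (f^[j] v) := by
      refine ⟨{p | ∀ j ∈ Finset.range (n + 1), dist (f^[j] p.1) (f^[j] p.2) < γ}, ?_, ?_⟩
      · have : ∀ᶠ p in 𝓝ˢ (diagonal S), ∀ j ∈ Finset.range (n + 1),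
            dist (f^[j] p.1) (f^[j] p.2) < γ := by
          rw [Filter.eventually_all_finset]
          intro j _
          refine IsOpen.mem_nhdsSet (isOpen_lt ?_ continuous_const) |>.mpr ?_
          · exact ((hcf j).comp continuous_fst).dist ((hcf j).comp continuous_snd)
          · rintro ⟨u, v⟩ huv
            obtain rfl : u = v := huv
            simpa using hγ
        exact this
      · intro u hu v hv huv j hj
        exact hc1 _ (hXT (hXi j u hu)) _ (hXT (hXi j v hv))
          (huv j (by simpa [Nat.lt_succ_iff] using hj))
    have hstep : ∀ a b, Relation.ReflTransGen (fun u v => u ∈ X ∧ v ∈ X ∧ (f u, v) ∈ D) a b →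
        (∀ j ≤ n, c (f^[j] b) = c (f^[j] z₂)) →
        ∃ m, ∃ y ∈ Λ, f^[m] y = z₂ ∧ ∀ j ≤ n, c (f^[j] a) = c (f^[j] y) := by
      intro a b hab hb
      induction hab using Relation.ReflTransGen.head_induction_on with
      | refl => exact ⟨0, z₂, hz₂, rfl, hb⟩
      | @head u v huv _ ih =>
        obtain ⟨hu, hv, huvD⟩ := huv
        obtain ⟨m, y, hy, hyz, hsim⟩ := ih
        obtain ⟨w, hw, hwy, hsim', -⟩ := hpull u (hXΛ hu) y hy
          (fun j hj => (hDsim _ (hmaps hu) _ hv huvD j hj).trans (hsim j hj))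
        exact ⟨m + 1, w, hw, by rw [Function.iterate_succ_apply, hwy, hyz], hsim'⟩
    obtain ⟨ε, hε, hεU⟩ := Metric.isOpen_iff.mp hU z₁ hz₁U
    obtain ⟨M, hM⟩ := pow_unbounded_of_one_lt (r / ε) hκ
    rw [div_lt_iff₀ hε] at hM
    obtain ⟨a, ha, hza⟩ := hsimW _ (hΛW (hΛi M z₁ hz₁))
    obtain ⟨b, hb, hzb⟩ := hsimW _ (hΛW hz₂)
    obtain ⟨m, y, hy, hyz, hsim⟩ := hstep a b (hchain D hD a ha b hb) (fun j hj => (hzb j hj).symm)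
    have hsim' : ∀ j ≤ n, c (f^[j] (f^[M] z₁)) = c (f^[j] y) := fun j hj =>
      (hza j hj).trans (hsim j hj)
    obtain ⟨w, hw, hwy, -, hd⟩ := hpulls M z₁ hz₁ y hy hsim'
    have h1 := hclose _ _ (fun j _ => hΛT j _ (hΛi M z₁ hz₁)) (fun j _ => hΛT j y hy) hsim'
    have h2 : κ ^ M * dist z₁ w < κ ^ M * ε := by linarith
    have h3 : dist z₁ w < ε := lt_of_mul_lt_mul_left h2 (by positivity)
    refine ⟨m + M, z₂, ⟨w, ⟨hεU (by rwa [mem_ball, dist_comm]), hw⟩, ?_⟩, hz₂V⟩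
    rw [Function.iterate_add_apply, hwy, hyz]

/-! ### Markov structure of isolated expanding sets -/

/-- The connected components of the `η`-neighbourhood of `Λ` which meet `Λ`. -/
def thickeningCells {S : Type*} [MetricSpace S] (Λ : Set S) (η : ℝ) : Set (Set S) :=
  connectedComponentIn (thickening η Λ) '' Λ

lemma finite_thickeningCells {S : Type*} [MetricSpace S] [LocallyConnectedSpace S] {Λ : Set S}
    (hΛ : IsCompact Λ) {η : ℝ} (hη : 0 < η) : (thickeningCells Λ η).Finite := by
  have hsub : Λ ⊆ thickening η Λ := self_subset_thickening hη _
  obtain ⟨t, htΛ, ht⟩ := hΛ.elim_nhds_subcover (connectedComponentIn (thickening η Λ))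
    (fun x hx => isOpen_thickening.connectedComponentIn.mem_nhds
      (mem_connectedComponentIn (hsub hx)))
  refine (t.finite_toSet.image (connectedComponentIn (thickening η Λ))).subset ?_
  rintro _ ⟨x, hx, rfl⟩
  obtain ⟨y, hy, hxy⟩ := mem_iUnion₂.mp (ht hx)
  exact ⟨y, hy, connectedComponentIn_eq hxy⟩

/-- At suitable scales, the components of a neighbourhood of `Λ` have disjoint closures. -/
lemma exists_disjoint_closure_thickeningCells {S : Type*} [MetricSpace S]
    [LocallyConnectedSpace S] {Λ : Set S} (hΛ : IsCompact Λ) {η₀ : ℝ} (hη₀ : 0 < η₀) :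
    ∃ η₁ η₂ : ℝ, 0 < η₁ ∧ η₁ < η₂ ∧ η₂ < η₀ ∧
      (∀ x ∈ Λ, closure (connectedComponentIn (thickening η₁ Λ) x) ⊆
        connectedComponentIn (thickening η₂ Λ) x) ∧
      ∀ C ∈ thickeningCells Λ η₁, ∀ C' ∈ thickeningCells Λ η₁, C ≠ C' →
        closure C ∩ closure C' = ∅ := by
  let N : Set ℕ := (fun η => (thickeningCells Λ η).ncard) '' Ioo 0 η₀
  have hN : N.Nonempty := ⟨_, mem_image_of_mem _ (x := η₀ / 2) ⟨by linarith, by linarith⟩⟩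
  obtain ⟨η₁, ⟨h1, h10⟩, hmin⟩ := Nat.sInf_mem hN
  obtain ⟨η₂, h12, h20⟩ := exists_between h10
  have h2 := h1.trans h12
  have hsub1 : Λ ⊆ thickening η₁ Λ := self_subset_thickening h1 _
  have hsub2 : Λ ⊆ thickening η₂ Λ := self_subset_thickening h2 _
  have hcl : ∀ x ∈ Λ, closure (connectedComponentIn (thickening η₁ Λ) x) ⊆
        connectedComponentIn (thickening η₂ Λ) x := by
    intro x hx
    refine isPreconnected_connectedComponentIn.closure.subset_connectedComponentIn
      (subset_closure (mem_connectedComponentIn (hsub1 hx))) ?_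
    exact (closure_mono (connectedComponentIn_subset _ _)).trans
      ((closure_thickening_subset_cthickening _ _).trans (cthickening_subset_thickening' h2 h12 _))
  let φ : Set S → Set S := fun C => ⋃ x ∈ C ∩ Λ, connectedComponentIn (thickening η₂ Λ) x
  have hφ : ∀ x ∈ Λ, φ (connectedComponentIn (thickening η₁ Λ) x) =
      connectedComponentIn (thickening η₂ Λ) x := by
    intro x hx
    refine Subset.antisymm (iUnion₂_subset ?_) ?_
    · rintro y ⟨hy, hyΛ⟩
      exact (connectedComponentIn_eq (hcl x hx (subset_closure hy))).ge
    · exact subset_biUnion_of_mem (u := fun x => connectedComponentIn (thickening η₂ Λ) x)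
        (⟨mem_connectedComponentIn (hsub1 hx), hx⟩ : x ∈ _ ∩ Λ)
  have himg : φ '' thickeningCells Λ η₁ = thickeningCells Λ η₂ := by
    unfold thickeningCells
    rw [image_image]
    exact image_congr hφ
  have hfin := finite_thickeningCells hΛ h1
  have hinj : InjOn φ (thickeningCells Λ η₁) := by
    refine injOn_of_ncard_image_eq ?_ hfin
    refine le_antisymm (ncard_image_le hfin) ?_
    rw [himg]
    simp only at hmin
    rw [hmin]
    exact Nat.sInf_le ⟨η₂, ⟨h2, h20⟩, rfl⟩
  refine ⟨η₁, η₂, h1, h12, h20, hcl, ?_⟩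
  rintro C ⟨x, hx, rfl⟩ C' ⟨y, hy, rfl⟩ hne
  by_contra hcon
  obtain ⟨z, hzx, hzy⟩ := nonempty_iff_ne_empty.mpr hcon
  refine hne (hinj (mem_image_of_mem _ hx) (mem_image_of_mem _ hy) ?_)
  rw [hφ x hx, hφ y hy, connectedComponentIn_eq (hcl x hx hzx),
    connectedComponentIn_eq (hcl y hy hzy)]

/-- An isolated totally disconnected expanding set is generated by finitely many inverse branches
defined on domains with disjoint closures. -/
theorem LocallyExpanding.exists_markov {S : Type*} [MetricSpace S]
    [LocallyConnectedSpace S] {f : S → S} {Λ W : Set S} {κ r : ℝ}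
    (h : LocallyExpanding f Λ κ r) (hΛ : IsCompact Λ) (hne : Λ.Nonempty) (hmaps : MapsTo f Λ Λ)
    (htd : IsTotallyDisconnected Λ) (hW : IsOpen W) (hΛW : Λ ⊆ W)
    (hiso : ∀ z, (∀ i, f^[i] z ∈ W) → z ∈ Λ) :
    ∃ n > 0, ∃ (U : Fin n → Set S) (edge : Fin n → Fin n → Prop) (br : Fin n → Fin n → S → S),
      (∀ k, IsOpen (U k)) ∧ (∀ k, IsConnected (U k)) ∧ (∀ k, U k ⊆ W) ∧
      (∀ k l, k ≠ l → closure (U k) ∩ closure (U l) = ∅) ∧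
      (∀ k l, edge k l → MapsTo (br k l) (closure (U l)) (U k)) ∧
      (∀ k l, edge k l → ∀ x ∈ closure (U l), f (br k l x) = x) ∧
      ∀ x ∈ Λ, ∃ k l, edge k l ∧ x ∈ U k ∧ f x ∈ U l ∧ br k l (f x) = x := by
  have hκ := h.one_lt
  have hr := h.r_pos
  obtain ⟨ρ₀, hρ₀, hρ₀W⟩ := hΛ.exists_thickening_subset_open hW hΛW
  set ρ := min r ρ₀
  have hρ : 0 < ρ := lt_min hr hρ₀
  have hρr : ρ ≤ r := min_le_left _ _
  have hρW : thickening ρ Λ ⊆ W := (thickening_mono (min_le_right _ _) _).trans hρ₀W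
  obtain ⟨γ, hγ, c, hc1, hc2⟩ := htd.exists_coloring hΛ (half_pos hρ)
  have hη₀ : 0 < min γ (ρ / 2) := lt_min hγ (half_pos hρ)
  obtain ⟨η₁, η₂, h1, h12, h20, hcl, hdisj⟩ := exists_disjoint_closure_thickeningCells hΛ hη₀
  have h2γ : η₂ ≤ γ := h20.le.trans (min_le_left _ _)
  have h2ρ : η₂ ≤ ρ / 2 := h20.le.trans (min_le_right _ _)
  have hsub1 : Λ ⊆ thickening η₁ Λ := self_subset_thickening h1 _
  -- cells are small
  have hdiam : ∀ x ∈ Λ, ∀ u ∈ closure (connectedComponentIn (thickening η₁ Λ) x),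
      ∀ v ∈ closure (connectedComponentIn (thickening η₁ Λ) x), dist u v < ρ / 2 := by
    intro x hx u hu v hv
    have hsub : connectedComponentIn (thickening η₂ Λ) x ⊆ thickening γ Λ :=
      (connectedComponentIn_subset _ _).trans (thickening_mono h2γ _)
    have hcol : c u = c v := isPreconnected_connectedComponentIn.eq_of_forall_dist_lt hγ
      (fun a ha b hb => hc1 a (hsub ha) b (hsub hb)) (hcl x hx hu) (hcl x hx hv)
    exact hc2 u (hsub (hcl x hx hu)) v (hsub (hcl x hx hv)) hcol
  have hlift : ∀ x : S, ∃ g : S → S, x ∈ Λ → ∀ v, dist (f x) v < ρ / 2 →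
      f (g v) = v ∧ κ * dist x (g v) ≤ dist (f x) v := by
    intro x
    by_cases hx : x ∈ Λ
    · choose! g hg using h.lift x (self_subset_thickening hr _ hx)
      exact ⟨g, fun _ v hv => hg v (by linarith)⟩
    · exact ⟨id, fun hx' => absurd hx' hx⟩
  choose G hG using hlift
  have hcontr : ∀ a b : ℝ, 0 ≤ a → κ * a ≤ b → a ≤ b := fun a b ha hab => by nlinarith
  have hfin := finite_thickeningCells hΛ h1
  have : Finite (thickeningCells Λ η₁) := hfin
  obtain ⟨n, ⟨e⟩⟩ := Finite.exists_equiv_fin (thickeningCells Λ η₁)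
  let U : Fin n → Set S := fun k => (e.symm k).1
  have hU : ∀ k, ∃ x ∈ Λ, connectedComponentIn (thickening η₁ Λ) x = U k := fun k => (e.symm k).2
  have hUx : ∀ x ∈ Λ, ∃ k, x ∈ U k := by
    intro x hx
    refine ⟨e ⟨_, mem_image_of_mem _ hx⟩, ?_⟩
    simp only [U, Equiv.symm_apply_apply]
    exact mem_connectedComponentIn (hsub1 hx)
  have hUη : ∀ k, U k ⊆ thickening η₁ Λ := by
    intro k
    obtain ⟨x, hx, hxk⟩ := hU k
    rw [← hxk]
    exact connectedComponentIn_subset _ _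
  have hUeq : ∀ k, ∀ x ∈ U k, U k = connectedComponentIn (thickening η₁ Λ) x := by
    intro k x hxk
    obtain ⟨y, hy, hyk⟩ := hU k
    rw [← hyk] at hxk ⊢
    exact connectedComponentIn_eq hxk
  have hUdiam : ∀ k, ∀ u ∈ closure (U k), ∀ v ∈ closure (U k), dist u v < ρ / 2 := by
    intro k
    obtain ⟨x, hx, hxk⟩ := hU k
    rw [← hxk]
    exact hdiam x hx
  let edge : Fin n → Fin n → Prop := fun k l => ∃ x, x ∈ Λ ∧ x ∈ U k ∧ f x ∈ U l
  obtain ⟨x₀, hx₀⟩ : ∃ x₀ : Fin n → Fin n → S, ∀ k l, edge k l →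
      x₀ k l ∈ Λ ∧ x₀ k l ∈ U k ∧ f (x₀ k l) ∈ U l := by
    have : ∀ k l, ∃ x, edge k l → x ∈ Λ ∧ x ∈ U k ∧ f x ∈ U l := by
      intro k l
      by_cases hkl : edge k l
      · exact ⟨hkl.choose, fun _ => hkl.choose_spec⟩
      · exact ⟨hne.some, fun hkl' => absurd hkl' hkl⟩
    choose x₀ hx₀ using this
    exact ⟨x₀, hx₀⟩
  let br : Fin n → Fin n → S → S := fun k l => G (x₀ k l)
  have hbr : ∀ k l, edge k l → ∀ v ∈ closure (U l), f (br k l v) = v ∧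
      κ * dist (x₀ k l) (br k l v) ≤ dist (f (x₀ k l)) v ∧ dist (x₀ k l) (br k l v) < ρ / 2 := by
    intro k l hkl v hv
    obtain ⟨hxΛ, hxk, hxl⟩ := hx₀ k l hkl
    have hd := hUdiam l _ (subset_closure hxl) v hv
    obtain ⟨ha, hb⟩ := hG (x₀ k l) hxΛ v hd
    exact ⟨ha, hb, (hcontr _ _ dist_nonneg hb).trans_lt hd⟩
  have hmapsU : ∀ k l, edge k l → MapsTo (br k l) (closure (U l)) (U k) := by
    intro k l hkl
    obtain ⟨hxΛ, hxk, hxl⟩ := hx₀ k l hkl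
    have hthick : ∀ v ∈ closure (U l), br k l v ∈ thickening r Λ := fun v hv =>
      mem_thickening_iff.mpr ⟨_, hxΛ, by
        rw [dist_comm]; linarith [(hbr k l hkl v hv).2.2]⟩
    have hcont : ContinuousOn (br k l) (closure (U l)) := by
      have : LipschitzOnWith 1 (br k l) (closure (U l)) := by
        refine LipschitzOnWith.of_dist_le_mul fun v hv v' hv' => ?_
        obtain ⟨ha, hb, hd⟩ := hbr k l hkl v hv
        obtain ⟨ha', hb', hd'⟩ := hbr k l hkl v' hv'
        have hexp := h.expand _ (hthick v hv) (br k l v') (by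
          rw [dist_comm] at hd
          linarith [dist_triangle (br k l v) (x₀ k l) (br k l v')])
        rw [ha, ha'] at hexp
        simpa using hcontr _ _ dist_nonneg hexp
      exact this.continuousOn
    have hpre : IsPreconnected (br k l '' closure (U l)) := by
      obtain ⟨y, hy, hyl⟩ := hU l
      refine IsPreconnected.image ?_ _ hcont
      rw [← hyl]
      exact isPreconnected_connectedComponentIn.closure
    have hxmem : x₀ k l ∈ br k l '' closure (U l) := by
      refine ⟨f (x₀ k l), subset_closure hxl, ?_⟩
      obtain ⟨-, hb, -⟩ := hbr k l hkl _ (subset_closure hxl)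
      rw [dist_self] at hb
      exact (dist_le_zero.mp (hcontr _ _ dist_nonneg hb)).symm
    have hsub : br k l '' closure (U l) ⊆ thickening η₁ Λ := by
      rintro _ ⟨v, hv, rfl⟩
      obtain ⟨ha, hb, hd⟩ := hbr k l hkl v hv
      have hvc : v ∈ cthickening η₁ Λ :=
        closure_thickening_subset_cthickening _ _ (closure_mono (hUη l) hv)
      rw [hΛ.cthickening_eq_biUnion_closedBall h1.le] at hvc
      obtain ⟨a, haΛ, hva⟩ := mem_iUnion₂.mp hvc
      rw [mem_closedBall] at hva
      obtain ⟨w', hw', hdw⟩ := h.lift _ (hthick v hv) a (by rw [ha]; linarith)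
      rw [ha] at hdw
      have hdw' : dist (br k l v) w' < η₁ := by
        by_contra! hcon
        nlinarith
      have hwΛ : w' ∈ Λ := by
        apply hiso
        rintro (_ | i)
        · refine hρW (mem_thickening_iff.mpr ⟨_, hxΛ, ?_⟩)
          rw [Function.iterate_zero, id, dist_comm]
          linarith [dist_triangle (x₀ k l) (br k l v) w']
        · rw [Function.iterate_succ_apply, hw']
          exact hΛW (hmaps.iterate i haΛ)
      exact mem_thickening_iff.mpr ⟨w', hwΛ, hdw'⟩
    intro v hv
    rw [hUeq k _ hxk]
    exact hpre.subset_connectedComponentIn hxmem hsub (mem_image_of_mem _ hv)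
  have hn : 0 < n := by
    obtain ⟨x, hx⟩ := hne
    obtain ⟨k, -⟩ := hUx x hx
    exact k.pos
  refine ⟨n, hn, U, edge, br, ?_, ?_, ?_, ?_, hmapsU, fun k l hkl x hx => (hbr k l hkl x hx).1, ?_⟩
  · intro k
    obtain ⟨x, hx, hxk⟩ := hU k
    rw [← hxk]
    exact isOpen_thickening.connectedComponentIn
  · intro k
    obtain ⟨x, hx, hxk⟩ := hU k
    rw [← hxk]
    exact isConnected_connectedComponentIn_iff.mpr (hsub1 hx)
  · intro k
    exact (hUη k).trans ((thickening_mono (by linarith) _).trans hρW)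
  · intro k l hkl
    refine hdisj _ (e.symm k).2 _ (e.symm l).2 fun heq => hkl ?_
    exact e.symm.injective (Subtype.ext heq)
  · intro x hx
    obtain ⟨k, hk⟩ := hUx x hx
    obtain ⟨l, hl⟩ := hUx (f x) (hmaps hx)
    have hkl : edge k l := ⟨x, hx, hk, hl⟩
    refine ⟨k, l, hkl, hk, hl, ?_⟩
    have hmem := hmapsU k l hkl (subset_closure hl)
    have hd := hUdiam k _ (subset_closure hk) _ (subset_closure hmem)
    have hexp := h.expand x (self_subset_thickening hr _ hx) _ (hd.trans_le (by linarith))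
    rw [(hbr k l hkl _ (subset_closure hl)).1, dist_self] at hexp
    exact (dist_le_zero.mp (hcontr _ _ dist_nonneg hexp)).symm

/-! ### Adapted metrics -/

/-- Expansion by the factor `κ` and openness at the points of a compact set imply local
expansion. -/
lemma LocallyExpanding.of_expand {S : Type*} [MetricSpace S] {f : S → S} (hf : Continuous f)
    {X : Set S} (hX : IsCompact X) {κ r : ℝ} (hκ : 1 < κ) (hr : 0 < r)
    (hexp : ∀ u ∈ thickening r X, ∀ v, dist u v < r → κ * dist u v ≤ dist (f u) (f v))
    (hopen : ∀ x ∈ X, 𝓝 (f x) ≤ map f (𝓝 x)) : ∃ r' > 0, LocallyExpanding f X κ r' := by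
  obtain ⟨η, hη, V, hV, hXV, hVη⟩ : ∃ η > 0, ∃ V : Set S, IsOpen V ∧ X ⊆ V ∧
      ∀ u ∈ V, ∀ v, dist (f u) v < η → ∃ w, f w = v ∧ dist u w < r := by
    refine hX.induction_on (p := fun s => ∃ η > 0, ∃ V : Set S, IsOpen V ∧ s ⊆ V ∧
      ∀ u ∈ V, ∀ v, dist (f u) v < η → ∃ w, f w = v ∧ dist u w < r) ?_ ?_ ?_ ?_
    · exact ⟨1, one_pos, ∅, isOpen_empty, Subset.rfl, by simp⟩
    · rintro s t hst ⟨η, hη, V, hV, htV, h⟩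
      exact ⟨η, hη, V, hV, hst.trans htV, h⟩
    · rintro s t ⟨η, hη, V, hV, hsV, h⟩ ⟨η', hη', V', hV', htV', h'⟩
      refine ⟨min η η', lt_min hη hη', V ∪ V', hV.union hV', union_subset_union hsV htV', ?_⟩
      rintro u (hu | hu) v huv
      · exact h u hu v (huv.trans_le (min_le_left _ _))
      · exact h' u hu v (huv.trans_le (min_le_right _ _))
    · intro x hx
      have himg : f '' ball x (r / 2) ∈ 𝓝 (f x) :=
        hopen x hx (image_mem_map (ball_mem_nhds x (half_pos hr)))
      obtain ⟨η, hη, hηball⟩ := Metric.mem_nhds_iff.mp himg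
      let V := ball x (r / 2) ∩ f ⁻¹' ball (f x) (η / 2)
      have hVo : IsOpen V := isOpen_ball.inter (isOpen_ball.preimage hf)
      have hxV : x ∈ V := ⟨mem_ball_self (half_pos hr), mem_ball_self (half_pos hη)⟩
      refine ⟨V, mem_nhdsWithin_of_mem_nhds (hVo.mem_nhds hxV), η / 2, half_pos hη, V, hVo,
        Subset.rfl, ?_⟩
      rintro u ⟨hu, hfu⟩ v huv
      rw [mem_ball] at hu
      rw [mem_preimage, mem_ball] at hfu
      have hv : v ∈ ball (f x) η := by
        rw [mem_ball]
        rw [dist_comm] at huv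
        linarith [dist_triangle v (f u) (f x)]
      obtain ⟨w, hw, rfl⟩ := hηball hv
      rw [mem_ball'] at hw
      exact ⟨w, rfl, by linarith [dist_triangle u x w]⟩
  obtain ⟨δ, hδ, hδV⟩ := hX.exists_thickening_subset_open hV hXV
  have hle1 : min r (min η δ) ≤ r := min_le_left _ _
  have hle2 : min r (min η δ) ≤ η := (min_le_right _ _).trans (min_le_left _ _)
  have hle3 : min r (min η δ) ≤ δ := (min_le_right _ _).trans (min_le_right _ _)
  refine ⟨min r (min η δ), lt_min hr (lt_min hη hδ), hκ, lt_min hr (lt_min hη hδ), ?_, ?_⟩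
  · intro u hu v huv
    exact hexp u (thickening_mono hle1 _ hu) v (huv.trans_le hle1)
  · intro u hu v huv
    obtain ⟨w, rfl, hw⟩ := hVη u (hδV (thickening_mono hle3 _ hu)) v (huv.trans_le hle2)
    exact ⟨w, rfl, hexp u (thickening_mono hle1 _ hu) w hw⟩

/-- If an iterate of `f` expands near `X`, then `f` is locally expanding for an equivalent
metric. -/
theorem exists_adapted_metric {S : Type*} [M₀ : MetricSpace S] {f : S → S} (hf : Continuous f)
    {X : Set S} (hX : IsCompact X) {κ r : ℝ} (hκ : 1 < κ) (hr : 0 < r) {m : ℕ} (hm : 0 < m)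
    (hexp : ∀ u ∈ thickening r X, ∀ v, dist u v < r →
      κ ^ m * dist u v ≤ dist (f^[m] u) (f^[m] v))
    (hopen : ∀ x ∈ X, 𝓝 (f x) ≤ map f (𝓝 x)) :
    ∃ M : MetricSpace S, M.toPseudoMetricSpace.toUniformSpace.toTopologicalSpace =
      M₀.toPseudoMetricSpace.toUniformSpace.toTopologicalSpace ∧
      ∃ r' > 0, @LocallyExpanding S M f X κ r' := by
  have hκ0 : 0 < κ := zero_lt_one.trans hκ
  let ρ : S → S → ℝ := fun u v => ∑ i ∈ Finset.range m, (κ ^ i)⁻¹ * dist (f^[i] u) (f^[i] v)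
  have hdρ : ∀ u v, dist u v ≤ ρ u v := by
    intro u v
    have := Finset.single_le_sum (f := fun i => (κ ^ i)⁻¹ * dist (f^[i] u) (f^[i] v))
      (fun i _ => by positivity) (Finset.mem_range.mpr hm)
    simpa using this
  have hnhds : ∀ x s, s ∈ 𝓝 x ↔ ∃ ε > 0, ∀ y, ρ y x < ε → y ∈ s := by
    intro x s
    have hcont : Tendsto (fun y => ρ y x) (𝓝 x) (𝓝 0) := by
      have : Continuous fun y => ρ y x := by
        refine continuous_finsetSum _ fun i _ => ?_
        exact continuous_const.mul ((hf.iterate i).dist continuous_const)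
      convert this.tendsto x
      simp [ρ]
    constructor
    · intro hs
      obtain ⟨ε, hε, hs⟩ := Metric.mem_nhds_iff.mp hs
      exact ⟨ε, hε, fun y hy => hs ((hdρ y x).trans_lt hy)⟩
    · rintro ⟨ε, hε, hs⟩
      exact mem_of_superset (hcont.eventually (gt_mem_nhds hε)) hs
  have hρexp : ∀ u, (∃ x ∈ X, ρ u x < r) → ∀ v, ρ u v < r → κ * ρ u v ≤ ρ (f u) (f v) := by
    rintro u ⟨x, hx, hux⟩ v huv
    have h1 := hexp u (mem_thickening_iff.mpr ⟨x, hx, (hdρ u x).trans_lt hux⟩) v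
      ((hdρ u v).trans_lt huv)
    have h3 := Finset.sum_range_succ (fun i => (κ ^ i)⁻¹ * dist (f^[i] u) (f^[i] v)) m
    rw [Finset.sum_range_succ'] at h3
    have h4 : κ * ∑ k ∈ Finset.range m, (κ ^ (k + 1))⁻¹ * dist (f^[k + 1] u) (f^[k + 1] v) =
        ρ (f u) (f v) := by
      simp only [ρ, Finset.mul_sum, Function.iterate_succ_apply]
      refine Finset.sum_congr rfl fun i _ => ?_
      rw [pow_succ]
      field_simp
    rw [← h4]
    refine mul_le_mul_of_nonneg_left ?_ hκ0.le
    have h5 : dist u v ≤ (κ ^ m)⁻¹ * dist (f^[m] u) (f^[m] v) := by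
      rw [inv_mul_eq_div, le_div_iff₀ (by positivity)]
      linarith
    simp only [pow_zero, inv_one, one_mul, Function.iterate_zero, id] at h3
    simp only [ρ]
    linarith
  let M₁ : MetricSpace S :=
    { dist := ρ
      dist_self := fun u => by simp [ρ]
      dist_comm := fun u v => by simp only [ρ, dist_comm]
      dist_triangle := fun u v w => by
        simp only [ρ, ← Finset.sum_add_distrib, ← mul_add]
        gcongr
        exact dist_triangle _ _ _
      eq_of_dist_eq_zero := fun {u v} huv => dist_le_zero.mp (huv ▸ hdρ u v) }
  have htop : M₀.toPseudoMetricSpace.toUniformSpace.toTopologicalSpace =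
      M₁.toPseudoMetricSpace.toUniformSpace.toTopologicalSpace := by
    refine TopologicalSpace.ext_nhds fun x => ?_
    ext s
    rw [hnhds, @Metric.mem_nhds_iff S M₁.toPseudoMetricSpace]
    rfl
  let M : MetricSpace S := @MetricSpace.replaceTopology S
    M₀.toPseudoMetricSpace.toUniformSpace.toTopologicalSpace M₁ htop
  refine ⟨M, rfl, @LocallyExpanding.of_expand S M f hf X hX κ r hκ hr ?_ hopen⟩
  intro u hu v huv
  obtain ⟨x, hx, hd⟩ := mem_thickening_iff.mp hu
  exact hρexp u ⟨x, hx, hd⟩ v huv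

/-! ### Backward orbits converging to expanding sets -/

/-- Points near an expanding set have backward orbits which converge to it. -/
lemma LocallyExpanding.exists_backward_orbit {S : Type*} [MetricSpace S] {f : S → S} {Λ N : Set S}
    {κ r : ℝ} (h : LocallyExpanding f Λ κ r) (hΛ : IsCompact Λ) (hsurj : f '' Λ = Λ)
    (hN : IsOpen N) (hΛN : Λ ⊆ N) :
    ∃ V : Set S, IsOpen V ∧ Λ ⊆ V ∧ ∀ x ∈ V, ∃ u : ℕ → S, u 0 = x ∧ (∀ k, f (u (k + 1)) = u k) ∧
      (∀ k, u k ∈ N) ∧ ∀ O, IsOpen O → Λ ⊆ O → ∀ᶠ k in atTop, u k ∈ O := by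
  have hκ := h.one_lt
  have hκ0 := h.kappa_pos
  obtain ⟨ρ₀, hρ₀, hρ₀N⟩ := hΛ.exists_thickening_subset_open hN hΛN
  set ρ := min r ρ₀
  have hρ : 0 < ρ := lt_min h.r_pos hρ₀
  have hρr : ρ ≤ r := min_le_left _ _
  have hρN : thickening ρ Λ ⊆ N := (thickening_mono (min_le_right _ _) _).trans hρ₀N
  refine ⟨thickening ρ Λ, isOpen_thickening, self_subset_thickening hρ _, fun x hx => ?_⟩
  obtain ⟨a, ha, hxa⟩ := mem_thickening_iff.mp hx
  have hstep : ∀ p : {p : S × S // p.2 ∈ Λ ∧ dist p.1 p.2 < ρ},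
      ∃ p' : {p : S × S // p.2 ∈ Λ ∧ dist p.1 p.2 < ρ},
        f p'.1.1 = p.1.1 ∧ κ * dist p'.1.1 p'.1.2 ≤ dist p.1.1 p.1.2 := by
    rintro ⟨⟨u, a⟩, ha, hua⟩
    obtain ⟨a', ha', rfl⟩ : a ∈ f '' Λ := hsurj.symm ▸ ha
    obtain ⟨w, hwu, hw⟩ := h.lift a' (self_subset_thickening h.r_pos _ ha') u
      (by rw [dist_comm]; exact hua.trans_le hρr)
    rw [dist_comm a', dist_comm (f a')] at hw
    have : dist w a' ≤ κ * dist w a' := by nlinarith [dist_nonneg (x := w) (y := a')]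
    exact ⟨⟨⟨w, a'⟩, ha', (this.trans hw).trans_lt hua⟩, hwu, hw⟩
  choose F hF1 hF2 using hstep
  let s : ℕ → {p : S × S // p.2 ∈ Λ ∧ dist p.1 p.2 < ρ} := fun k => F^[k] ⟨⟨x, a⟩, ha, hxa⟩
  have hs : ∀ k, s (k + 1) = F (s k) := fun k => Function.iterate_succ_apply' _ _ _
  have hdist : ∀ k, κ ^ k * dist (s k).1.1 (s k).1.2 < ρ := by
    intro k
    induction k with
    | zero => simpa [s] using hxa
    | succ k ih =>
      have := mul_le_mul_of_nonneg_left (hF2 (s k)) (pow_nonneg hκ0.le k)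
      rw [hs, pow_succ, mul_assoc]
      linarith
  refine ⟨fun k => (s k).1.1, rfl, fun k => by simp only [hs, hF1], fun k => ?_, fun O hO hΛO => ?_⟩
  · exact hρN (mem_thickening_iff.mpr ⟨_, (s k).2.1, (s k).2.2⟩)
  · obtain ⟨ε, hε, hεO⟩ := hΛ.exists_thickening_subset_open hO hΛO
    filter_upwards [(tendsto_pow_atTop_atTop_of_one_lt hκ).eventually_gt_atTop (ρ / ε)] with k hk
    rw [div_lt_iff₀ hε] at hk
    have h1 : κ ^ k * dist (s k).1.1 (s k).1.2 < κ ^ k * ε := (hdist k).trans hk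
    exact hεO (mem_thickening_iff.mpr ⟨_, (s k).2.1, lt_of_mul_lt_mul_left h1 (by positivity)⟩)

/-- A backward orbit accumulating on an expanding set can be modified to converge to it. -/
lemma LocallyExpanding.exists_bridge {S : Type*} [MetricSpace S] {f : S → S} {Λ N : Set S}
    {κ r : ℝ} (h : LocallyExpanding f Λ κ r) (hΛ : IsCompact Λ) (hne : Λ.Nonempty)
    (hsurj : f '' Λ = Λ) (hN : IsOpen N) (hΛN : Λ ⊆ N) {b : ℕ → S}
    (hb : ∀ n, f (b (n + 1)) = b n) (hbN : ∀ n, b n ∈ N) (hbΛ : Λ ⊆ closure (range b)) :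
    ∃ y : ℕ → S, y 0 = b 0 ∧ (∀ k, f (y (k + 1)) = y k) ∧ (∀ k, y k ∈ N) ∧
      ∀ O, IsOpen O → Λ ⊆ O → ∀ᶠ k in atTop, y k ∈ O := by
  obtain ⟨V, hV, hΛV, hu⟩ := h.exists_backward_orbit hΛ hsurj hN hΛN
  obtain ⟨x, hx⟩ := hne
  obtain ⟨_, hnV, n, rfl⟩ := mem_closure_iff.mp (hbΛ hx) V hV (hΛV hx)
  obtain ⟨u, hu0, huf, huN, huO⟩ := hu _ hnV
  refine ⟨fun k => if k < n then b k else u (k - n), ?_, fun k => ?_, fun k => ?_, fun O hO hΛO => ?_⟩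
  · by_cases hn : 0 < n
    · simp [hn]
    · obtain rfl : n = 0 := by omega
      simpa using hu0
  · rcases lt_trichotomy (k + 1) n with hk | hk | hk
    · simp [hk, show k < n by omega, hb]
    · subst hk
      simp [hu0, hb]
    · obtain ⟨j, rfl⟩ := Nat.exists_eq_add_of_le (show n ≤ k by omega)
      have : n + j + 1 - n = j + 1 := by omega
      simp [show ¬ n + j + 1 < n by omega, this, huf]
  · simp only
    split_ifs
    exacts [hbN k, huN _]
  · filter_upwards [(tendsto_sub_atTop_nat n).eventually (huO O hO hΛO), eventually_ge_atTop n]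
      with k hk hkn
    simpa [not_lt.mpr hkn] using hk

/-! ### Adding orbits converging to a compact set -/

lemma IsCompact.union_image_of_eventually {S ι : Type*} [TopologicalSpace S] {K : Set S}
    (hK : IsCompact K) {u : ι → S} (hu : ∀ O, IsOpen O → K ⊆ O → ∀ᶠ i in cofinite, u i ∈ O)
    (A : Set ι) : IsCompact (K ∪ u '' A) := by
  rw [isCompact_iff_ultrafilter_le_nhds]
  intro F hF
  by_contra! hcon
  have hO : ∀ x ∈ K, ∃ V, IsOpen V ∧ x ∈ V ∧ V ∉ F := by
    intro x hx
    have := hcon x (Or.inl hx)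
    rw [(nhds_basis_opens x).ge_iff] at this
    push Not at this
    obtain ⟨V, ⟨hxV, hV⟩, hVF⟩ := this
    exact ⟨V, hV, hxV, hVF⟩
  obtain ⟨V, hVo, hKV, hVF⟩ : ∃ V, IsOpen V ∧ K ⊆ V ∧ V ∉ F := by
    refine hK.induction_on (p := fun s => ∃ V, IsOpen V ∧ s ⊆ V ∧ V ∉ F) ?_ ?_ ?_ ?_
    · exact ⟨∅, isOpen_empty, Subset.rfl, F.empty_notMem⟩
    · rintro s t hst ⟨V, hV, htV, h⟩
      exact ⟨V, hV, hst.trans htV, h⟩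
    · rintro s t ⟨V, hV, hsV, h⟩ ⟨V', hV', htV', h'⟩
      refine ⟨V ∪ V', hV.union hV', union_subset_union hsV htV', ?_⟩
      rw [Ultrafilter.union_mem_iff]
      tauto
    · intro x hx
      obtain ⟨V, hV, hxV, hVF⟩ := hO x hx
      exact ⟨V, mem_nhdsWithin_of_mem_nhds (hV.mem_nhds hxV), V, hV, Subset.rfl, hVF⟩
  have hfin : {i | u i ∉ V}.Finite := by simpa [eventually_cofinite] using hu V hVo hKV
  have hF' : u '' (A ∩ {i | u i ∉ V}) ∈ F := by
    have h1 : Vᶜ ∈ F := Ultrafilter.compl_mem_iff_notMem.mpr hVF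
    have h2 : K ∪ u '' A ∈ F := le_principal_iff.mp hF
    filter_upwards [h1, h2] with x hx hx'
    rcases hx' with hx' | ⟨i, hi, rfl⟩
    · exact absurd (hKV hx') hx
    · exact ⟨i, ⟨hi, hx⟩, rfl⟩
  obtain ⟨x, ⟨i, ⟨hi, -⟩, rfl⟩, hx⟩ := (((hfin.inter_of_right A).image u).isCompact).ultrafilter_le_nhds F
    (le_principal_iff.mpr hF')
  exact hcon _ (Or.inr ⟨i, hi, rfl⟩) hx

lemma IsTotallyDisconnected.union_range_of_eventually {S ι : Type*} [TopologicalSpace S]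
    [T2Space S] {K : Set S} (hK : IsCompact K) (htd : IsTotallyDisconnected K) {u : ι → S}
    (hu : ∀ O, IsOpen O → K ⊆ O → ∀ᶠ i in cofinite, u i ∈ O) :
    IsTotallyDisconnected (K ∪ range u) := by
  intro C hCX hC
  by_cases hCK : C ⊆ K
  · exact htd C hCK hC
  obtain ⟨x, hxC, hxK⟩ := not_subset.mp hCK
  have hclosed : IsClosed (K ∪ u '' (u ⁻¹' {x}ᶜ)) := (hK.union_image_of_eventually hu _).isClosed
  have hcov : C ⊆ {x} ∪ (K ∪ u '' (u ⁻¹' {x}ᶜ)) := by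
    intro z hz
    by_cases hzx : z = x
    · exact Or.inl hzx
    · rcases hCX hz with h | ⟨i, rfl⟩
      · exact Or.inr (Or.inl h)
      · exact Or.inr (Or.inr ⟨i, hzx, rfl⟩)
  have hxnot : x ∉ K ∪ u '' (u ⁻¹' {x}ᶜ) := by
    rintro (h | ⟨i, hi, h⟩)
    · exact hxK h
    · exact hi h
  rcases isPreconnected_iff_subset_of_disjoint_closed.mp hC {x} _ isClosed_singleton hclosed hcov
    (by rw [singleton_inter_eq_empty.mpr hxnot, inter_empty]) with hsub | hsub
  · exact subsingleton_singleton.anti hsub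
  · exact absurd (hsub hxC) hxnot

/-! ### Chain transitivity -/

lemma exists_dist_lt_mem_of_mem_nhdsSet_diagonal {S : Type*} [MetricSpace S] [CompactSpace S]
    {D : Set (S × S)} (hD : D ∈ 𝓝ˢ (diagonal S)) :
    ∃ β > 0, ∀ u v, dist u v < β → (u, v) ∈ D := by
  rw [nhdsSet_diagonal_eq_uniformity, Metric.mem_uniformity_dist] at hD
  obtain ⟨β, hβ, h⟩ := hD
  exact ⟨β, hβ, fun u v => @h u v⟩

lemma chainTransitiveOn_of_transitive {S : Type*} [MetricSpace S] [CompactSpace S] {f : S → S}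
    (hf : Continuous f) {Λ : Set S} (hmaps : MapsTo f Λ Λ)
    (htrans : ∀ U V : Set S, IsOpen U → IsOpen V → (U ∩ Λ).Nonempty → (V ∩ Λ).Nonempty →
      ∃ m : ℕ, (f^[m] '' (U ∩ Λ) ∩ V).Nonempty) : ChainTransitiveOn f Λ := by
  intro D hD a ha b hb
  obtain ⟨β, hβ, hβD⟩ := exists_dist_lt_mem_of_mem_nhdsSet_diagonal hD
  rcases eq_or_ne a b with rfl | hab
  · exact .refl
  have hd := dist_pos.mpr hab
  have hUo : IsOpen ({z | dist (f a) (f z) < β / 2} ∩ ball a (dist a b / 2)) :=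
    (isOpen_lt (continuous_const.dist hf) continuous_const).inter isOpen_ball
  obtain ⟨m, v, ⟨u, ⟨⟨huβ, hua⟩, hu⟩, rfl⟩, hub⟩ := htrans _
    (ball b (min (β / 2) (dist a b / 2))) hUo isOpen_ball
    ⟨a, ⟨by simpa using hβ, mem_ball_self (by linarith)⟩, ha⟩
    ⟨b, mem_ball_self (lt_min (by linarith) (by linarith)), hb⟩
  rw [mem_ball, lt_min_iff] at hub
  rw [mem_ball] at hua
  have hui : ∀ i, f^[i] u ∈ Λ := fun i => hmaps.iterate i hu
  match m with
  | 0 =>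
    simp only [Function.iterate_zero, id] at hub
    rw [dist_comm] at hua
    linarith [dist_triangle a u b]
  | 1 =>
    simp only [Function.iterate_one] at hub
    refine .single ⟨ha, hb, hβD _ _ ?_⟩
    have : dist (f a) (f u) < β / 2 := huβ
    linarith [dist_triangle (f a) (f u) b]
  | m + 2 =>
    have horb : ∀ j, Relation.ReflTransGen (fun u v => u ∈ Λ ∧ v ∈ Λ ∧ (f u, v) ∈ D) (f u)
        (f^[j + 1] u) := by
      intro j
      induction j with
      | zero => exact .refl
      | succ j ih =>
        refine ih.tail ⟨hui _, hui _, hβD _ _ ?_⟩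
        rw [← Function.iterate_succ_apply' f, dist_self]
        exact hβ
    refine .head ⟨ha, hui 1, hβD _ _ ?_⟩ ((horb m).tail ⟨hui _, hb, hβD _ _ ?_⟩)
    · have : dist (f a) (f u) < β / 2 := huβ
      simpa using this.trans (by linarith)
    · rw [← Function.iterate_succ_apply' f]
      linarith

/-- Two chain transitive sets joined by backward orbits in both directions form a chain transitive
set. -/
lemma ChainTransitiveOn.union_bridges {S : Type*} [MetricSpace S] [CompactSpace S] {f : S → S}
    {Λ₁ Λ₂ : Set S} (hs₁ : f '' Λ₁ = Λ₁) (hs₂ : f '' Λ₂ = Λ₂)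
    (ht₁ : ChainTransitiveOn f Λ₁) (ht₂ : ChainTransitiveOn f Λ₂) {y w : ℕ → S}
    (hy0 : y 0 ∈ Λ₂) (hw0 : w 0 ∈ Λ₁)
    (hy : ∀ k, f (y (k + 1)) = y k) (hw : ∀ k, f (w (k + 1)) = w k)
    (hyO : ∀ O, IsOpen O → Λ₁ ⊆ O → ∀ᶠ k in atTop, y k ∈ O)
    (hwO : ∀ O, IsOpen O → Λ₂ ⊆ O → ∀ᶠ k in atTop, w k ∈ O) :
    ChainTransitiveOn f (Λ₁ ∪ Λ₂ ∪ range (Sum.elim y w)) := by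
  intro D hD
  obtain ⟨β, hβ, hβD⟩ := exists_dist_lt_mem_of_mem_nhdsSet_diagonal hD
  set X := Λ₁ ∪ Λ₂ ∪ range (Sum.elim y w)
  set R : S → S → Prop := fun u v => u ∈ X ∧ v ∈ X ∧ (f u, v) ∈ D
  have hΛ₁X : Λ₁ ⊆ X := subset_union_left.trans subset_union_left
  have hΛ₂X : Λ₂ ⊆ X := subset_union_right.trans subset_union_left
  have hyX : ∀ k, y k ∈ X := fun k => Or.inr ⟨Sum.inl k, rfl⟩
  have hwX : ∀ k, w k ∈ X := fun k => Or.inr ⟨Sum.inr k, rfl⟩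
  have hback : ∀ u : ℕ → S, (∀ k, u k ∈ X) → (∀ k, f (u (k + 1)) = u k) → ∀ k j,
      Relation.ReflTransGen R (u (k + j)) (u k) := by
    intro u huX hu k j
    induction j with
    | zero => exact .refl
    | succ j ih =>
      refine .head ⟨huX _, huX _, hβD _ _ ?_⟩ ih
      rw [← add_assoc, hu, dist_self]
      exact hβ
  have hsub : ∀ Λ ⊆ X, ChainTransitiveOn f Λ → ∀ a ∈ Λ, ∀ b ∈ Λ, Relation.ReflTransGen R a b :=
    fun Λ hΛX ht a ha b hb => Relation.ReflTransGen.mono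
      (fun p q hpq => ⟨hΛX hpq.1, hΛX hpq.2.1, hpq.2.2⟩) _ _ (ht D hD a ha b hb)
  have hreach : ∀ Λ ⊆ X, f '' Λ = Λ → ChainTransitiveOn f Λ → ∀ u : ℕ → S, (∀ k, u k ∈ X) →
      (∀ k, f (u (k + 1)) = u k) → (∀ O, IsOpen O → Λ ⊆ O → ∀ᶠ k in atTop, u k ∈ O) →
      ∀ a ∈ Λ, ∀ k, Relation.ReflTransGen R a (u k) := by
    intro Λ hΛX hs ht u huX hu huO a ha k
    obtain ⟨j, hj⟩ := eventually_atTop.mp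
      (huO (thickening β Λ) isOpen_thickening (self_subset_thickening hβ _))
    obtain ⟨a', ha', hd⟩ := mem_thickening_iff.mp (hj (k + j) (by omega))
    obtain ⟨v, hv, rfl⟩ : a' ∈ f '' Λ := hs.symm ▸ ha'
    refine .trans (.tail (hsub Λ hΛX ht a ha v hv) ⟨hΛX hv, huX _, hβD _ _ ?_⟩)
      (hback u huX hu k j)
    rwa [dist_comm]
  have hy1 := hreach Λ₁ hΛ₁X hs₁ ht₁ y hyX hy hyO
  have hw2 := hreach Λ₂ hΛ₂X hs₂ ht₂ w hwX hw hwO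
  have hyb : ∀ k, Relation.ReflTransGen R (y k) (y 0) := fun k => by
    simpa using hback y hyX hy 0 k
  have hwb : ∀ k, Relation.ReflTransGen R (w k) (w 0) := fun k => by
    simpa using hback w hwX hw 0 k
  have h12 : Relation.ReflTransGen R (w 0) (y 0) := hy1 _ hw0 0
  have h21 : Relation.ReflTransGen R (y 0) (w 0) := hw2 _ hy0 0
  have hto : ∀ a ∈ X, Relation.ReflTransGen R a (w 0) := by
    rintro a ((ha | ha) | ⟨k | k, rfl⟩)
    · exact hsub Λ₁ hΛ₁X ht₁ a ha _ hw0
    · exact (hsub Λ₂ hΛ₂X ht₂ a ha _ hy0).trans h21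
    · exact (hyb k).trans h21
    · exact hwb k
  have hfrom : ∀ b ∈ X, Relation.ReflTransGen R (w 0) b := by
    rintro b ((hb | hb) | ⟨k | k, rfl⟩)
    · exact hsub Λ₁ hΛ₁X ht₁ _ hw0 b hb
    · exact h12.trans (hsub Λ₂ hΛ₂X ht₂ _ hy0 b hb)
    · exact hy1 _ hw0 k
    · exact h12.trans (hw2 _ hy0 k)
  exact fun a ha b hb => (hto a ha).trans (hfrom b hb)

/-! ### Expansion for some compatible metric -/

/-- `f` is locally expanding near `X` for some metric inducing the given topology. -/
def TopExpanding {S : Type*} [τ : TopologicalSpace S] (f : S → S) (X : Set S) : Prop :=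
  ∃ M : MetricSpace S, M.toPseudoMetricSpace.toUniformSpace.toTopologicalSpace = τ ∧
    ∃ κ r : ℝ, @LocallyExpanding S M f X κ r

namespace TopExpanding

variable {S : Type*} [τ : TopologicalSpace S] {f : S → S} {X Y : Set S}

lemma mono (h : TopExpanding f X) (hY : Y ⊆ X) : TopExpanding f Y := by
  obtain ⟨M, hM, κ, r, h⟩ := h
  exact ⟨M, hM, κ, r, h.mono_subset hY⟩

lemma isTotallyDisconnected (h : TopExpanding f X) (hf : Continuous f) (hX : IsCompact X)
    (hmaps : MapsTo f X X) {n : ℕ} (U : Fin n → Set S) (hUo : ∀ k, IsOpen (U k))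
    (hUd : ∀ k l, k ≠ l → Disjoint (U k) (U l)) (hcov : X ⊆ ⋃ k, U k)
    (hinj : ∀ k l, InjOn f (X ∩ U k ∩ f ⁻¹' U l)) : IsTotallyDisconnected X := by
  obtain ⟨M, rfl, κ, r, h⟩ := h
  exact h.isTotallyDisconnected hf hX hmaps U hUo hUd hcov hinj

lemma exists_isolated [CompactSpace S] (h : TopExpanding f X)
    (hf : Continuous f) (hX : IsCompact X)
    (hmaps : MapsTo f X X) (hsurj : f '' X = X) (htd : IsTotallyDisconnected X)
    {O : Set S} (hO : IsOpen O) (hXO : X ⊆ O) :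
    ∃ Λ W : Set S, X ⊆ Λ ∧ IsCompact Λ ∧ f '' Λ = Λ ∧ IsOpen W ∧ Λ ⊆ W ∧ W ⊆ O ∧
      (∀ z, (∀ i, f^[i] z ∈ W) → z ∈ Λ) ∧ IsTotallyDisconnected Λ ∧
      (ChainTransitiveOn f X → ∀ U V : Set S, IsOpen U → IsOpen V → (U ∩ Λ).Nonempty →
        (V ∩ Λ).Nonempty → ∃ m : ℕ, (f^[m] '' (U ∩ Λ) ∩ V).Nonempty) := by
  obtain ⟨M, rfl, κ, r, h⟩ := h
  exact h.exists_isolated hf hX hmaps hsurj htd hO hXO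

lemma exists_markov [LocallyConnectedSpace S] {W : Set S}
    (h : TopExpanding f X) (hX : IsCompact X) (hne : X.Nonempty) (hmaps : MapsTo f X X)
    (htd : IsTotallyDisconnected X) (hW : IsOpen W) (hXW : X ⊆ W)
    (hiso : ∀ z, (∀ i, f^[i] z ∈ W) → z ∈ X) :
    ∃ n > 0, ∃ (U : Fin n → Set S) (edge : Fin n → Fin n → Prop) (br : Fin n → Fin n → S → S),
      (∀ k, IsOpen (U k)) ∧ (∀ k, IsConnected (U k)) ∧ (∀ k, U k ⊆ W) ∧
      (∀ k l, k ≠ l → closure (U k) ∩ closure (U l) = ∅) ∧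
      (∀ k l, edge k l → MapsTo (br k l) (closure (U l)) (U k)) ∧
      (∀ k l, edge k l → ∀ x ∈ closure (U l), f (br k l x) = x) ∧
      ∀ x ∈ X, ∃ k l, edge k l ∧ x ∈ U k ∧ f x ∈ U l ∧ br k l (f x) = x := by
  obtain ⟨M, rfl, κ, r, h⟩ := h
  exact h.exists_markov hX hne hmaps htd hW hXW hiso

lemma exists_bridge {N : Set S} (h : TopExpanding f X) (hX : IsCompact X) (hne : X.Nonempty)
    (hsurj : f '' X = X) (hN : IsOpen N) (hXN : X ⊆ N) {b : ℕ → S}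
    (hb : ∀ n, f (b (n + 1)) = b n) (hbN : ∀ n, b n ∈ N) (hbX : X ⊆ closure (range b)) :
    ∃ y : ℕ → S, y 0 = b 0 ∧ (∀ k, f (y (k + 1)) = y k) ∧ (∀ k, y k ∈ N) ∧
      ∀ O, IsOpen O → X ⊆ O → ∀ᶠ k in atTop, y k ∈ O := by
  obtain ⟨M, rfl, κ, r, h⟩ := h
  exact h.exists_bridge hX hne hsurj hN hXN hb hbN hbX

end TopExpanding

/-! ### Metric derivatives -/

/-- Near `x`, the map `g` multiplies distances by `s`, up to an error of smaller order. -/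
def HasMetricDeriv {X Y : Type*} [MetricSpace X] [MetricSpace Y] (g : X → Y) (x : X) (s : ℝ) :
    Prop :=
  (fun p : X × X => dist (g p.1) (g p.2) - s * dist p.1 p.2) =o[𝓝 (x, x)]
    fun p => dist p.1 p.2

namespace HasMetricDeriv

variable {X Y Z : Type*} [MetricSpace X] [MetricSpace Y] [MetricSpace Z]
  {g : X → Y} {k : Y → Z} {x : X} {s t : ℝ}

lemma iff_eventually : HasMetricDeriv g x s ↔ ∀ ε > 0, ∀ᶠ p : X × X in 𝓝 (x, x),
    |dist (g p.1) (g p.2) - s * dist p.1 p.2| ≤ ε * dist p.1 p.2 := by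
  simp [HasMetricDeriv, Asymptotics.isLittleO_iff, abs_of_nonneg dist_nonneg]

lemma eventually_le (h : HasMetricDeriv g x s) {a : ℝ} (ha : a < s) :
    ∀ᶠ p : X × X in 𝓝 (x, x), a * dist p.1 p.2 ≤ dist (g p.1) (g p.2) := by
  filter_upwards [iff_eventually.1 h (s - a) (sub_pos.2 ha)] with p hp
  have := (abs_le.1 hp).1
  nlinarith

lemma eventually_ge (h : HasMetricDeriv g x s) {a : ℝ} (ha : s < a) :
    ∀ᶠ p : X × X in 𝓝 (x, x), dist (g p.1) (g p.2) ≤ a * dist p.1 p.2 := by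
  filter_upwards [iff_eventually.1 h (a - s) (sub_pos.2 ha)] with p hp
  have := (abs_le.1 hp).2
  nlinarith

lemma isBigO (h : HasMetricDeriv g x s) :
    (fun p : X × X => dist (g p.1) (g p.2)) =O[𝓝 (x, x)] fun p => dist p.1 p.2 := by
  refine Asymptotics.IsBigO.of_bound (s + 1) ?_
  filter_upwards [h.eventually_ge (lt_add_one s)] with p hp
  simpa [abs_of_nonneg dist_nonneg] using hp

lemma continuousAt (h : HasMetricDeriv g x s) : ContinuousAt g x := by
  have h1 : Tendsto (fun y : X => (y, x)) (𝓝 x) (𝓝 (x, x)) :=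
    (Continuous.prodMk_left x).tendsto x
  have h2 := h1.eventually (h.eventually_ge (lt_add_one s))
  have h3 : Tendsto (fun y : X => (s + 1) * dist y x) (𝓝 x) (𝓝 0) := by
    have : Continuous fun y : X => (s + 1) * dist y x := by fun_prop
    simpa using this.tendsto x
  exact tendsto_iff_dist_tendsto_zero.2
    (squeeze_zero' (Eventually.of_forall fun _ => dist_nonneg) h2 h3)

lemma comp (hk : HasMetricDeriv k (g x) t) (hg : HasMetricDeriv g x s) :
    HasMetricDeriv (k ∘ g) x (t * s) := by
  have hc : Tendsto (fun p : X × X => (g p.1, g p.2)) (𝓝 (x, x)) (𝓝 (g x, g x)) :=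
    ContinuousAt.prodMap' hg.continuousAt hg.continuousAt
  have h1 := (hk.comp_tendsto hc).trans_isBigO hg.isBigO
  have h2 := hg.const_mul_left t
  refine (h1.add h2).congr_left fun p => ?_
  simp only [Function.comp]
  ring

lemma congr {g' : X → Y} (h : HasMetricDeriv g x s) (he : g =ᶠ[𝓝 x] g') :
    HasMetricDeriv g' x s := by
  refine Asymptotics.IsLittleO.congr' h ?_ EventuallyEq.rfl
  rw [nhds_prod_eq]
  filter_upwards [he.prod_inl _, he.prod_inr _] with p h1 h2
  rw [h1, h2]

lemma of_leftInverse (h : HasMetricDeriv g x s) (hs : 0 < s) {d : Y → X}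
    (hd : Function.LeftInverse d g) (hmap : map g (𝓝 x) = 𝓝 (g x)) :
    HasMetricDeriv d (g x) s⁻¹ := by
  rw [iff_eventually]
  intro ε hε
  rw [nhds_prod_eq, ← hmap, prod_map_map_eq, ← nhds_prod_eq, eventually_map]
  have hη : 0 < min (s / 2) (ε * s ^ 2 / 2) := by positivity
  filter_upwards [iff_eventually.1 h _ hη] with p hp
  simp only [hd p.1, hd p.2]
  have hD : (0 : ℝ) ≤ dist p.1 p.2 := dist_nonneg
  set D := dist p.1 p.2
  set E := dist (g p.1) (g p.2)
  have h1 : |E - s * D| ≤ s / 2 * D :=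
    hp.trans (mul_le_mul_of_nonneg_right (min_le_left _ _) hD)
  have h2 : |E - s * D| ≤ ε * s ^ 2 / 2 * D :=
    hp.trans (mul_le_mul_of_nonneg_right (min_le_right _ _) hD)
  have h3 : s / 2 * D ≤ E := by linarith [(abs_le.1 h1).1]
  have h4 : D - s⁻¹ * E = -(s⁻¹ * (E - s * D)) := by field_simp; ring
  rw [h4, abs_neg, abs_mul, abs_of_pos (inv_pos.2 hs)]
  calc s⁻¹ * |E - s * D| ≤ s⁻¹ * (ε * s ^ 2 / 2 * D) := by gcongr
    _ = ε * (s / 2 * D) := by field_simp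
    _ ≤ ε * E := by gcongr

lemma iterate {g : X → X} {σ : ℕ → ℝ} {n : ℕ}
    (h : ∀ i < n, HasMetricDeriv g (g^[i] x) (σ i)) :
    HasMetricDeriv g^[n] x (∏ i ∈ Finset.range n, σ i) := by
  induction n with
  | zero => simp [HasMetricDeriv]
  | succ n ih =>
    rw [Finset.prod_range_succ, mul_comm, Function.iterate_succ']
    exact (h n n.lt_succ_self).comp (ih fun i hi => h i (hi.trans n.lt_succ_self))

lemma tendsto (h : HasMetricDeriv g x s) :
    Tendsto (fun y => dist (g y) (g x) / dist y x) (𝓝[≠] x) (𝓝 s) := by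
  have h1 : Tendsto (fun y : X => (y, x)) (𝓝[≠] x) (𝓝 (x, x)) :=
    ((Continuous.prodMk_left x).tendsto x).mono_left nhdsWithin_le_nhds
  have h2 := (h.comp_tendsto h1).tendsto_div_nhds_zero
  have h3 := h2.add_const s
  rw [zero_add] at h3
  refine h3.congr' ?_
  filter_upwards [self_mem_nhdsWithin] with y hy
  have : dist y x ≠ 0 := dist_ne_zero.2 hy
  simp only [Function.comp]
  field_simp
  ring

end HasMetricDeriv

lemma HasStrictDerivAt.hasMetricDeriv {F : ℂ → ℂ} {F' z : ℂ} (h : HasStrictDerivAt F F' z) :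
    HasMetricDeriv F z ‖F'‖ := by
  have h1 := h.isLittleO.norm_right
  refine Asymptotics.IsLittleO.congr_right (Asymptotics.IsBigO.trans_isLittleO ?_ h1)
    fun p => (dist_eq_norm _ _).symm
  refine Asymptotics.IsBigO.of_bound 1 (Eventually.of_forall fun p => ?_)
  rw [one_mul, Real.norm_eq_abs, dist_eq_norm, dist_eq_norm, ← norm_mul]
  simpa [mul_comm] using abs_norm_sub_norm_le (F p.1 - F p.2) (F' * (p.1 - p.2))

/-! ### Charts of the Riemann sphere -/

/-- The conformal factor relating the chordal distance to the Euclidean one. -/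
noncomputable def chordalFactor (u v : ℂ) : ℝ :=
  2 / (√(1 + ‖u‖ ^ 2) * √(1 + ‖v‖ ^ 2))

lemma chordalFactor_pos (u v : ℂ) : 0 < chordalFactor u v := by
  unfold chordalFactor
  positivity

lemma continuous_chordalFactor : Continuous fun p : ℂ × ℂ => chordalFactor p.1 p.2 := by
  unfold chordalFactor
  refine continuous_const.div (by fun_prop) fun p => ?_
  positivity

namespace RSphere

lemma dist_eq_embed (x y : RSphere) : dist x y = dist (embed x) (embed y) := rfl

lemma isometry_embed : Isometry embed := Isometry.of_dist_eq fun _ _ => rfl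

lemma dist_eq_sqrt (x y : RSphere) : dist x y =
    √(dist (embed x).fst (embed y).fst ^ 2 + dist (embed x).snd (embed y).snd ^ 2) := by
  rw [dist_eq_embed, WithLp.prod_dist_eq_of_L2]

lemma embed_ofC_fst (z : ℂ) : (embed (ofC z)).fst = ((2 / (‖z‖ ^ 2 + 1)) : ℝ) • z := rfl

lemma embed_ofC_snd (z : ℂ) : (embed (ofC z)).snd = (‖z‖ ^ 2 - 1) / (‖z‖ ^ 2 + 1) := rfl

lemma embed_infty_fst : (embed infty).fst = 0 := rfl

lemma embed_infty_snd : (embed infty).snd = 1 := rfl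

lemma dist_ofC (u v : ℂ) : dist (ofC u) (ofC v) = chordalFactor u v * dist u v := by
  have hU : 0 < 1 + ‖u‖ ^ 2 := by positivity
  have hV : 0 < 1 + ‖v‖ ^ 2 := by positivity
  rw [dist_eq_sqrt, Real.sqrt_eq_iff_mul_self_eq (by positivity)
    (mul_nonneg (chordalFactor_pos u v).le dist_nonneg)]
  have h1 : chordalFactor u v * chordalFactor u v = 4 / ((1 + ‖u‖ ^ 2) * (1 + ‖v‖ ^ 2)) := by
    unfold chordalFactor
    rw [div_mul_div_comm, mul_mul_mul_comm, Real.mul_self_sqrt hU.le, Real.mul_self_sqrt hV.le]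
    norm_num
  rw [mul_mul_mul_comm, h1, ← sq, embed_ofC_fst, embed_ofC_fst, embed_ofC_snd, embed_ofC_snd,
    dist_eq_norm, dist_eq_norm, dist_eq_norm, Real.norm_eq_abs, sq_abs]
  simp only [Complex.sq_norm, Complex.normSq_apply] at hU hV ⊢
  simp only [Complex.sub_re, Complex.sub_im, Complex.real_smul, Complex.mul_re, Complex.mul_im,
    Complex.ofReal_re, Complex.ofReal_im]
  have hU' : u.re * u.re + u.im * u.im + 1 ≠ 0 := by linarith
  have hV' : v.re * v.re + v.im * v.im + 1 ≠ 0 := by linarith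
  field_simp
  ring

lemma inv_infty : inv infty = ofC 0 := rfl

lemma inv_ofC_zero : inv (ofC 0) = infty := if_pos rfl

lemma inv_ofC {z : ℂ} (hz : z ≠ 0) : inv (ofC z) = ofC z⁻¹ := if_neg hz

lemma cases_ofC (x : RSphere) : x = infty ∨ ∃ z, x = ofC z := by
  obtain ⟨_ | z⟩ := x
  · exact Or.inl rfl
  · exact Or.inr ⟨z, rfl⟩

lemma inv_inv (x : RSphere) : inv (inv x) = x := by
  obtain rfl | ⟨z, rfl⟩ := x.cases_ofC
  · rw [inv_infty, inv_ofC_zero]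
  · by_cases hz : z = 0
    · rw [hz, inv_ofC_zero, inv_infty]
    · rw [inv_ofC hz, inv_ofC (inv_ne_zero hz), _root_.inv_inv]

lemma embed_inv (x : RSphere) : (embed (inv x)).fst = (starRingEnd ℂ) (embed x).fst ∧
    (embed (inv x)).snd = -(embed x).snd := by
  obtain rfl | ⟨z, rfl⟩ := x.cases_ofC
  · rw [inv_infty, embed_infty_fst, embed_infty_snd, embed_ofC_fst, embed_ofC_snd]
    simp
  · by_cases hz : z = 0
    · subst hz
      rw [inv_ofC_zero, embed_infty_fst, embed_infty_snd, embed_ofC_fst, embed_ofC_snd]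
      simp
    · rw [inv_ofC hz, embed_ofC_fst, embed_ofC_snd, embed_ofC_fst, embed_ofC_snd]
      have hz' : ‖z‖ ≠ 0 := norm_ne_zero_iff.2 hz
      constructor
      · have h1 : z⁻¹ = ((‖z‖ ^ 2)⁻¹ : ℝ) • (starRingEnd ℂ) z := by
          rw [Complex.inv_def, Complex.sq_norm, Complex.real_smul, mul_comm]
        rw [norm_inv, h1, Complex.real_smul, Complex.real_smul, Complex.real_smul, map_mul,
          Complex.conj_ofReal, ← mul_assoc, ← Complex.ofReal_mul]
        congr 2
        field_simp
        ring
      · rw [norm_inv]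
        field_simp
        ring

lemma isometry_inv : Isometry inv := by
  refine Isometry.of_dist_eq fun x y => ?_
  rw [dist_eq_sqrt, dist_eq_sqrt, (embed_inv x).1, (embed_inv x).2, (embed_inv y).1,
    (embed_inv y).2, dist_neg_neg, Complex.dist_conj_conj]

lemma toC_ofC (z : ℂ) : toC (ofC z) = z := rfl

lemma toC_eq {x : RSphere} (hx : x ≠ infty) :
    toC x = (((1 - (embed x).snd)⁻¹ : ℝ) : ℂ) * (embed x).fst := by
  obtain rfl | ⟨z, rfl⟩ := x.cases_ofC
  · exact absurd rfl hx
  · rw [toC_ofC, embed_ofC_fst, embed_ofC_snd, Complex.real_smul, ← mul_assoc,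
      ← Complex.ofReal_mul]
    have h1 : (0 : ℝ) < ‖z‖ ^ 2 + 1 := by positivity
    have h2 : 1 - (‖z‖ ^ 2 - 1) / (‖z‖ ^ 2 + 1) = 2 / (‖z‖ ^ 2 + 1) := by
      field_simp
      ring
    rw [h2, inv_mul_cancel₀ (by positivity)]
    simp

lemma ofC_ne_infty (z : ℂ) : ofC z ≠ infty := by
  intro h
  have := congrArg RSphere.val h
  simp [ofC, infty] at this

lemma isOpen_ne_infty : IsOpen {x : RSphere | x ≠ infty} := isOpen_ne

lemma continuous_ofC : Continuous ofC := by
  refine continuous_iff_continuousAt.2 fun z => tendsto_iff_dist_tendsto_zero.2 ?_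
  have : Continuous fun u : ℂ => chordalFactor u z * dist u z :=
    (continuous_chordalFactor.comp (Continuous.prodMk_left z)).mul (by fun_prop)
  simpa [dist_ofC] using this.tendsto z

lemma continuousAt_toC (z : ℂ) : ContinuousAt toC (ofC z) := by
  have h1 : ContinuousAt (fun x : RSphere =>
      (((1 - (embed x).snd)⁻¹ : ℝ) : ℂ) * (embed x).fst) (ofC z) := by
    have hc := isometry_embed.continuous
    have hs : Continuous fun x : RSphere => (embed x).snd :=
      (WithLp.continuous_snd 2 ℂ ℝ).comp hc
    have hfs : Continuous fun x : RSphere => (embed x).fst :=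
      (WithLp.continuous_fst 2 ℂ ℝ).comp hc
    refine ContinuousAt.mul (Complex.continuous_ofReal.continuousAt.comp
      (ContinuousAt.inv₀ (by fun_prop) ?_)) hfs.continuousAt
    rw [embed_ofC_snd]
    have h1 : (0 : ℝ) < ‖z‖ ^ 2 + 1 := by positivity
    intro h
    field_simp at h
    linarith
  refine h1.congr ?_
  filter_upwards [isOpen_ne_infty.mem_nhds (ofC_ne_infty z)] with x hx
  exact (toC_eq hx).symm

lemma map_ofC_nhds (z : ℂ) : map ofC (𝓝 z) = 𝓝 (ofC z) := by
  refine le_antisymm (continuous_ofC.tendsto z) ?_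
  have h1 : ofC ∘ toC =ᶠ[𝓝 (ofC z)] id := by
    filter_upwards [isOpen_ne_infty.mem_nhds (ofC_ne_infty z)] with x hx
    obtain rfl | ⟨w, rfl⟩ := x.cases_ofC
    · exact absurd rfl hx
    · rfl
  calc 𝓝 (ofC z) = map (ofC ∘ toC) (𝓝 (ofC z)) := by rw [map_congr h1, map_id]
    _ = map ofC (map toC (𝓝 (ofC z))) := map_map.symm
    _ ≤ map ofC (𝓝 z) := map_mono (continuousAt_toC z)

/-- The chart `ofC` of the Riemann sphere, or its composition with `inv`: the parametrization is
`e`, its inverse is `d`, and `h` is the transition map to `ofC`. -/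
structure IsChart (e : ℂ → RSphere) (d : RSphere → ℂ) (h : ℂ → ℂ) : Prop where
  dist_eq : ∀ u v, dist (e u) (e v) = chordalFactor u v * dist u v
  map_nhds : ∀ z, map e (𝓝 z) = 𝓝 (e z)
  left_inv : Function.LeftInverse d e
  eq_ofC : ∀ u, u ≠ 0 → e u = ofC (h u)
  injective : Function.Injective h
  differentiableAt : ∀ u, u ≠ 0 → DifferentiableAt ℂ h u
  ne_zero : ∀ u, u ≠ 0 → h u ≠ 0
  apply_ofC : ∀ v, v ≠ 0 → d (ofC v) = h v

lemma isChart_ofC : IsChart ofC toC id where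
  dist_eq := dist_ofC
  map_nhds := map_ofC_nhds
  left_inv := toC_ofC
  eq_ofC _ _ := rfl
  injective := Function.injective_id
  differentiableAt _ _ := differentiableAt_id
  ne_zero _ h := h
  apply_ofC _ _ := rfl

lemma isChart_inv : IsChart (inv ∘ ofC) (toC ∘ inv) (·⁻¹) where
  dist_eq u v := by rw [Function.comp, Function.comp, isometry_inv.dist_eq, dist_ofC]
  map_nhds z := by
    let E : RSphere ≃ₜ RSphere :=
      { toFun := inv, invFun := inv, left_inv := inv_inv, right_inv := inv_inv
        continuous_toFun := isometry_inv.continuous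
        continuous_invFun := isometry_inv.continuous }
    rw [← map_map, map_ofC_nhds]
    exact E.map_nhds_eq (ofC z)
  left_inv z := by
    change toC (inv (inv (ofC z))) = z
    rw [inv_inv, toC_ofC]
  eq_ofC _ h := inv_ofC h
  injective := inv_injective
  differentiableAt _ h := differentiableAt_inv h
  ne_zero _ h := inv_ne_zero h
  apply_ofC v h := by
    change toC (inv (ofC v)) = _
    rw [inv_ofC h, toC_ofC]

lemma exists_isChart (x : RSphere) : ∃ e d h, IsChart e d h ∧ ∃ z, e z = x := by
  obtain rfl | ⟨z, rfl⟩ := x.cases_ofC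
  · exact ⟨_, _, _, isChart_inv, 0, inv_ofC_zero⟩
  · exact ⟨_, _, _, isChart_ofC, z, rfl⟩

instance : CompactSpace RSphere := by
  refine isCompact_univ_iff.1 ?_
  have hK : IsCompact (closedBall (0 : ℂ) 1) := isCompact_closedBall 0 1
  have h1 := hK.image continuous_ofC
  refine (h1.union (h1.image isometry_inv.continuous)).of_isClosed_subset isClosed_univ ?_
  rintro x -
  obtain rfl | ⟨z, rfl⟩ := x.cases_ofC
  · exact Or.inr ⟨ofC 0, ⟨0, by simp, rfl⟩, inv_ofC_zero⟩
  · by_cases hz : ‖z‖ ≤ 1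
    · exact Or.inl ⟨z, by simpa using hz, rfl⟩
    · have hz0 : z ≠ 0 := by
        rintro rfl
        simp at hz
      refine Or.inr ⟨ofC z⁻¹, ⟨z⁻¹, ?_, rfl⟩, ?_⟩
      · simpa using inv_le_one_of_one_le₀ (not_le.1 hz).le
      · rw [inv_ofC (inv_ne_zero hz0), _root_.inv_inv]

lemma IsChart.continuous {e d h} (H : IsChart e d h) : Continuous e :=
  continuous_iff_continuousAt.2 fun z => (H.map_nhds z).le

instance : LocallyConnectedSpace RSphere := by
  choose e d h H z hz using exists_isChart
  refine locallyConnectedSpace_of_connected_bases (fun x (r : ℝ) => e x '' ball (z x) r)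
    (fun _ r => 0 < r) (fun x => ?_) fun x r hr => ?_
  · have := (nhds_basis_ball (x := z x)).map (e x)
    rwa [(H x).map_nhds, hz] at this
  · exact (convex_ball (z x) r).isPreconnected.image _ (H x).continuous.continuousOn

instance (x : RSphere) : (𝓝[≠] x).NeBot := by
  obtain ⟨e, d, h, H, z, rfl⟩ := exists_isChart x
  have h1 : Tendsto e (𝓝[≠] z) (𝓝[≠] (e z)) := by
    refine tendsto_nhdsWithin_of_tendsto_nhds_of_eventually_within _
      ((H.continuous.tendsto z).mono_left nhdsWithin_le_nhds) ?_
    filter_upwards [self_mem_nhdsWithin] with u hu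
    exact fun h => hu (H.left_inv.injective h)
  exact h1.neBot

end RSphere

/-! ### Spherical derivatives of rational maps -/

lemma HasMetricDeriv.sphDeriv_eq {g : RSphere → RSphere} {x : RSphere} {s : ℝ}
    (h : HasMetricDeriv g x s) : sphDeriv g x = s :=
  h.tendsto.limsup_eq

lemma HasMetricDeriv.nonneg {g : RSphere → RSphere} {x : RSphere} {s : ℝ}
    (h : HasMetricDeriv g x s) : 0 ≤ s :=
  ge_of_tendsto' h.tendsto fun _ => div_nonneg dist_nonneg dist_nonneg

lemma sphDeriv_iterate_zero (f : RSphere → RSphere) (x : RSphere) : sphDeriv f^[0] x = 1 :=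
  (HasMetricDeriv.iterate (n := 0) (σ := fun _ => 0) (g := f) (x := x)
    (by simp)).sphDeriv_eq.trans (by simp)

namespace RSphere.IsChart

lemma hasMetricDeriv {e : ℂ → RSphere} {d : RSphere → ℂ} {h : ℂ → ℂ} (H : IsChart e d h) (z : ℂ) :
    HasMetricDeriv e z (chordalFactor z z) := by
  rw [HasMetricDeriv.iff_eventually]
  intro ε hε
  have h1 := continuous_chordalFactor.tendsto (z, z)
  filter_upwards [Metric.tendsto_nhds.1 h1 ε hε] with p hp
  rw [H.dist_eq, ← sub_mul, abs_mul, abs_of_nonneg dist_nonneg]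
  rw [Real.dist_eq] at hp
  gcongr

lemma continuousAt_inv {e : ℂ → RSphere} {d : RSphere → ℂ} {h : ℂ → ℂ} (H : IsChart e d h)
    (z : ℂ) : ContinuousAt d (e z) := by
  rw [ContinuousAt, ← H.map_nhds, tendsto_map'_iff, H.left_inv z, H.left_inv.comp_eq_id]
  exact tendsto_id

lemma eventually_apply_inv {e : ℂ → RSphere} {d : RSphere → ℂ} {h : ℂ → ℂ} (H : IsChart e d h)
    (z : ℂ) : ∀ᶠ y in 𝓝 (e z), e (d y) = y := by
  rw [← H.map_nhds, eventually_map]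
  exact Eventually.of_forall fun u => by rw [H.left_inv]

end RSphere.IsChart

namespace IsRationalMap

open RSphere Polynomial

variable {f : RSphere → RSphere} {p q : Polynomial ℂ}

lemma ne_zero_of_two_le (hf : IsRationalMap f p q) (hdeg : 2 ≤ ratDeg p q) :
    p ≠ 0 ∧ q ≠ 0 := by
  constructor
  · rintro rfl
    have := natDegree_eq_zero_of_isUnit (isCoprime_zero_left.1 hf.coprime)
    simp [ratDeg, this] at hdeg
  · rintro rfl
    have := natDegree_eq_zero_of_isUnit (isCoprime_zero_right.1 hf.coprime)
    simp [ratDeg, this] at hdeg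

lemma analyticAt_chart (hf : IsRationalMap f p q) (hp : p ≠ 0) (hq : q ≠ 0)
    {e e' : ℂ → RSphere} {d d' : RSphere → ℂ} {h h' : ℂ → ℂ} (H : IsChart e d h)
    (H' : IsChart e' d' h') {z w : ℂ} (hw : e' w = f (e z)) :
    AnalyticAt ℂ (d' ∘ f ∘ e) z := by
  have hcont : ContinuousAt (d' ∘ f ∘ e) z := by
    refine ContinuousAt.comp ?_ (hf.continuous.comp H.continuous).continuousAt
    rw [Function.comp, ← hw]
    exact H'.continuousAt_inv w
  refine Complex.analyticAt_of_differentiable_on_punctured_nhds_of_continuousAt ?_ hcont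
  set A : Set ℂ := {0} ∪ h ⁻¹' {v | p.IsRoot v} ∪ h ⁻¹' {v | q.IsRoot v} with hA
  have hAfin : A.Finite :=
    ((finite_singleton _).union ((finite_setOfPred_isRoot hp).preimage H.injective.injOn)).union
      ((finite_setOfPred_isRoot hq).preimage H.injective.injOn)
  have hform : ∀ u ∉ A, (d' ∘ f ∘ e) u = h' (p.eval (h u) / q.eval (h u)) := by
    intro u hu
    simp only [hA, mem_union, mem_singleton_iff, mem_preimage, mem_ofPred_eq, not_or,
      Polynomial.IsRoot.def] at hu
    rw [Function.comp, Function.comp, H.eq_ofC u hu.1.1, hf.eval _ hu.2,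
      H'.apply_ofC _ (div_ne_zero hu.1.2 hu.2)]
  filter_upwards [nhdsNE_le_cofinite z hAfin.compl_mem_cofinite] with u hu
  have hu' := hu
  simp only [hA, mem_compl_iff, mem_union, mem_singleton_iff, mem_preimage, mem_ofPred_eq, not_or,
    Polynomial.IsRoot.def] at hu'
  have h1 : DifferentiableAt ℂ (fun u => h' (p.eval (h u) / q.eval (h u))) u := by
    have hd := H.differentiableAt u hu'.1.1
    refine DifferentiableAt.fun_comp' (f := fun u => p.eval (h u) / q.eval (h u)) u
      (H'.differentiableAt _ (div_ne_zero hu'.1.2 hu'.2)) ?_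
    exact (p.differentiable.differentiableAt.fun_comp' u hd).div
      (q.differentiable.differentiableAt.fun_comp' u hd) hu'.2
  refine h1.congr_of_eventuallyEq ?_
  filter_upwards [hAfin.isClosed.isOpen_compl.mem_nhds hu] with v hv
  exact hform v hv

lemma exists_hasMetricDeriv (hf : IsRationalMap f p q) (hdeg : 2 ≤ ratDeg p q) (x : RSphere) :
    ∃ s, HasMetricDeriv f x s ∧ (s ≠ 0 → 𝓝 (f x) ≤ map f (𝓝 x)) := by
  obtain ⟨hp, hq⟩ := hf.ne_zero_of_two_le hdeg
  obtain ⟨e, d, h, H, z, rfl⟩ := exists_isChart x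
  obtain ⟨e', d', h', H', w, hw⟩ := exists_isChart (f (e z))
  set F := d' ∘ f ∘ e with hF
  have hFw : F z = w := by rw [hF, Function.comp, Function.comp, ← hw, H'.left_inv]
  have hF' := (hf.analyticAt_chart hp hq H H' hw).hasStrictDerivAt
  have hfe : ContinuousAt (f ∘ e) z := (hf.continuous.comp H.continuous).continuousAt
  have hev : e' ∘ F =ᶠ[𝓝 z] f ∘ e := by
    have := H'.eventually_apply_inv w
    rw [hw] at this
    exact hfe.eventually this
  have hev' : (e' ∘ F) ∘ d =ᶠ[𝓝 (e z)] f := by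
    rw [← H.map_nhds, EventuallyEq, eventually_map]
    filter_upwards [hev] with u hu
    rw [Function.comp, H.left_inv u, hu, Function.comp]
  refine ⟨chordalFactor w w * ‖deriv F z‖ * (chordalFactor z z)⁻¹, ?_, fun hs => ?_⟩
  · have hd := (H.hasMetricDeriv z).of_leftInverse (chordalFactor_pos z z) H.left_inv
      (H.map_nhds z)
    refine HasMetricDeriv.congr (HasMetricDeriv.comp ?_ hd) hev'
    rw [H.left_inv z]
    refine HasMetricDeriv.comp ?_ hF'.hasMetricDeriv
    rw [hFw]
    exact H'.hasMetricDeriv w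
  · have hne : deriv F z ≠ 0 := by
      intro h0
      simp [h0] at hs
    have hmap : map F (𝓝 z) = 𝓝 w := by rw [← hFw, ← hF'.map_nhds_eq hne]
    rw [← H.map_nhds, map_map, ← map_congr hev, ← map_map, hmap, H'.map_nhds, hw]

lemma hasMetricDeriv (hf : IsRationalMap f p q) (hdeg : 2 ≤ ratDeg p q) (x : RSphere) :
    HasMetricDeriv f x (sphDeriv f x) := by
  obtain ⟨s, hs, -⟩ := hf.exists_hasMetricDeriv hdeg x
  rwa [hs.sphDeriv_eq]

lemma nhds_le_map (hf : IsRationalMap f p q) (hdeg : 2 ≤ ratDeg p q) {x : RSphere}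
    (hx : sphDeriv f x ≠ 0) : 𝓝 (f x) ≤ map f (𝓝 x) := by
  obtain ⟨s, hs, h⟩ := hf.exists_hasMetricDeriv hdeg x
  exact h (hs.sphDeriv_eq ▸ hx)

lemma hasMetricDeriv_iterate (hf : IsRationalMap f p q) (hdeg : 2 ≤ ratDeg p q) (n : ℕ)
    (x : RSphere) :
    HasMetricDeriv f^[n] x (sphDeriv f^[n] x) := by
  have := HasMetricDeriv.iterate (n := n) (σ := fun i => sphDeriv f (f^[i] x))
    fun i _ => hf.hasMetricDeriv hdeg (f^[i] x)
  rwa [this.sphDeriv_eq]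

lemma sphDeriv_nonneg (hf : IsRationalMap f p q) (hdeg : 2 ≤ ratDeg p q) (n : ℕ) (x : RSphere) :
    0 ≤ sphDeriv f^[n] x :=
  (hf.hasMetricDeriv_iterate hdeg n x).nonneg

lemma sphDeriv_iterate_add (hf : IsRationalMap f p q) (hdeg : 2 ≤ ratDeg p q) (m n : ℕ)
    (x : RSphere) : sphDeriv f^[m + n] x = sphDeriv f^[m] (f^[n] x) * sphDeriv f^[n] x := by
  rw [Function.iterate_add]
  exact ((hf.hasMetricDeriv_iterate hdeg m _).comp
    (hf.hasMetricDeriv_iterate hdeg n x)).sphDeriv_eq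

lemma eventually_lt_sphDeriv (hf : IsRationalMap f p q) (hdeg : 2 ≤ ratDeg p q) (n : ℕ)
    {x : RSphere} {a : ℝ} (ha : a < sphDeriv f^[n] x) :
    ∀ᶠ y in 𝓝 x, a < sphDeriv f^[n] y := by
  obtain ⟨b, hab, hb⟩ := exists_between ha
  have h1 := (hf.hasMetricDeriv_iterate hdeg n x).eventually_le hb
  have h2 : Tendsto (fun y : RSphere => (y, y)) (𝓝 x) (𝓝 (x, x)) :=
    (continuous_id.prodMk continuous_id).tendsto x
  filter_upwards [h2.eventually h1.eventually_nhds] with y hy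
  have h3 : Tendsto (fun u : RSphere => (u, y)) (𝓝[≠] y) (𝓝 (y, y)) :=
    ((Continuous.prodMk_left y).tendsto y).mono_left nhdsWithin_le_nhds
  refine hab.trans_le (ge_of_tendsto (hf.hasMetricDeriv_iterate hdeg n y).tendsto ?_)
  filter_upwards [h3.eventually hy, self_mem_nhdsWithin] with u hu hne
  rwa [le_div_iff₀ (dist_pos.2 hne)]

lemma isOpen_compl_critSet (hf : IsRationalMap f p q) (hdeg : 2 ≤ ratDeg p q) :
    IsOpen (critSet f)ᶜ := by
  refine isOpen_iff_mem_nhds.2 fun x hx => ?_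
  have h0 : 0 < sphDeriv f^[1] x :=
    lt_of_le_of_ne (hf.sphDeriv_nonneg hdeg 1 x) (Ne.symm hx)
  filter_upwards [hf.eventually_lt_sphDeriv hdeg 1 h0] with y hy
  exact hy.ne'

end IsRationalMap

/-! ### Uniform expansion of rational maps -/

namespace IsRationalMap

variable {f : RSphere → RSphere} {p q : Polynomial ℂ} {X : Set RSphere}

/-- Expansion at every point of a compact set without critical points is uniform, and persists
on invariant sets close to it. -/
lemma exists_isOpen_expanding (hf : IsRationalMap f p q) (hdeg : 2 ≤ ratDeg p q)
    (hX : IsCompact X) (hcrit : ∀ x ∈ X, x ∉ critSet f)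
    (hexp : ∀ x ∈ X, ∃ m, 1 ≤ m ∧ 1 < sphDeriv f^[m] x) :
    ∃ O, IsOpen O ∧ X ⊆ O ∧ ∀ Y ⊆ O, MapsTo f Y Y → ExpandingOn f Y := by
  set a : ℕ → ℝ := fun N => 1 / ((N : ℝ) + 1) with ha
  have ha0 : ∀ N, 0 < a N := fun N => by positivity
  have ha1 : ∀ N, a N ≤ 1 := fun N => by
    rw [ha, div_le_one (by positivity)]
    linarith [(Nat.cast_nonneg N : (0 : ℝ) ≤ N)]
  have hanti : Antitone a := fun M N h => Nat.one_div_le_one_div h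
  have hlim : Tendsto a atTop (𝓝 0) := tendsto_one_div_add_atTop_nhds_zero_nat
  set A : ℕ → Set RSphere := fun N =>
    {y | (∃ m, 1 ≤ m ∧ m ≤ N ∧ 1 + a N < sphDeriv f^[m] y) ∧ a N < sphDeriv f^[1] y} with hA
  have hAo : ∀ N, IsOpen (A N) := by
    refine fun N => isOpen_iff_mem_nhds.2 ?_
    rintro y ⟨⟨m, hm1, hmN, hm⟩, h1⟩
    filter_upwards [hf.eventually_lt_sphDeriv hdeg m hm, hf.eventually_lt_sphDeriv hdeg 1 h1]
      with u hu hu'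
    exact ⟨⟨m, hm1, hmN, hu⟩, hu'⟩
  have hAm : Monotone A := by
    rintro M N h y ⟨⟨m, hm1, hmM, hm⟩, h1⟩
    exact ⟨⟨m, hm1, hmM.trans h, by linarith [hanti h]⟩, (hanti h).trans_lt h1⟩
  have hcov : X ⊆ ⋃ N, A N := by
    intro x hx
    obtain ⟨m, hm1, hm⟩ := hexp x hx
    have h1 : 0 < sphDeriv f^[1] x :=
      lt_of_le_of_ne (hf.sphDeriv_nonneg hdeg 1 x) (Ne.symm (hcrit x hx))
    obtain ⟨N, hN1, hN2, hN3⟩ := ((hlim.eventually_lt_const (sub_pos.2 hm)).and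
      ((hlim.eventually_lt_const h1).and (eventually_ge_atTop m))).exists
    exact mem_iUnion.2 ⟨N, ⟨m, hm1, hN3, by linarith⟩, hN2⟩
  obtain ⟨N, hN⟩ := hX.elim_directed_cover A hAo hcov hAm.directed_le
  refine ⟨A N, hAo N, hN, fun Y hY hmaps => ?_⟩
  set l : ℝ := (1 + a N) ^ ((N + 1 : ℕ) : ℝ)⁻¹ with hl
  have hl1 : 1 < l := Real.one_lt_rpow (by linarith [ha0 N]) (by positivity)
  have hlN : l ^ (N + 1) = 1 + a N :=
    Real.rpow_inv_natCast_pow (by linarith [ha0 N]) N.succ_ne_zero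
  have hl0 : 0 < l := zero_lt_one.trans hl1
  have hlow : ∀ n, ∀ x ∈ Y, a N ^ n ≤ sphDeriv f^[n] x := by
    intro n
    induction n with
    | zero => intro x _; rw [sphDeriv_iterate_zero, pow_zero]
    | succ n ih =>
      intro x hx
      rw [hf.sphDeriv_iterate_add hdeg, pow_succ]
      exact mul_le_mul (ih _ (hmaps hx)) (hY hx).2.le (ha0 N).le (hf.sphDeriv_nonneg hdeg n _)
  have hr1 : a N / l ≤ 1 := (div_le_one hl0).2 ((ha1 N).trans hl1.le)
  have key : ∀ n, ∀ x ∈ Y, (a N / l) ^ N * l ^ n ≤ sphDeriv f^[n] x := by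
    intro n
    induction n using Nat.strong_induction_on with
    | _ n ih =>
      intro x hx
      obtain ⟨m, hm1, hmN, hm⟩ := (hY hx).1
      obtain h | h := lt_or_ge n m
      · calc (a N / l) ^ N * l ^ n ≤ (a N / l) ^ n * l ^ n := by
              gcongr ?_ * _
              exact pow_le_pow_of_le_one (by have := ha0 N; positivity) hr1 (h.le.trans hmN)
          _ = a N ^ n := by rw [← mul_pow, div_mul_cancel₀ _ hl0.ne']
          _ ≤ _ := hlow n x hx
      · obtain ⟨k, rfl⟩ := Nat.exists_eq_add_of_le' h
        rw [hf.sphDeriv_iterate_add hdeg, pow_add, ← mul_assoc]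
        refine mul_le_mul (ih k (by omega) _ (hmaps.iterate m hx)) ?_ (by positivity)
          (hf.sphDeriv_nonneg hdeg k _)
        calc l ^ m ≤ l ^ (N + 1) := pow_le_pow_right₀ hl1.le (by omega)
          _ ≤ _ := hlN.trans_le hm.le
  exact ⟨(a N / l) ^ N, by have := ha0 N; positivity, l, hl1, fun x hx m _ => key m x hx⟩

lemma exists_pos_two_mul_dist_le (hf : IsRationalMap f p q) (hdeg : 2 ≤ ratDeg p q)
    (hX : IsCompact X) (hexp : ExpandingOn f X) :
    ∃ m > 0, ∃ r > 0, ∀ u ∈ thickening r X, ∀ v, dist u v < r →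
      2 * dist u v ≤ dist (f^[m] u) (f^[m] v) := by
  obtain ⟨c, hc, l, hl, h⟩ := hexp
  obtain ⟨m, hm, hm1⟩ := (((tendsto_pow_atTop_atTop_of_one_lt hl).const_mul_atTop
    hc).eventually_gt_atTop 2 |>.and (eventually_ge_atTop 1)).exists
  set G : Set (RSphere × RSphere) :=
    interior {p | 2 * dist p.1 p.2 ≤ dist (f^[m] p.1) (f^[m] p.2)} with hG
  have hK : IsCompact ((fun x => (x, x)) '' X) :=
    hX.image (continuous_id.prodMk continuous_id)
  have hKG : (fun x => (x, x)) '' X ⊆ G := by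
    rintro _ ⟨x, hx, rfl⟩
    exact mem_interior_iff_mem_nhds.2
      ((hf.hasMetricDeriv_iterate hdeg m x).eventually_le (hm.trans_le (h x hx m hm1)))
  obtain ⟨r, hr, hrG⟩ := hK.exists_thickening_subset_open isOpen_interior hKG
  refine ⟨m, hm1, r / 2, half_pos hr, fun u hu v huv => ?_⟩
  obtain ⟨x, hx, hux⟩ := mem_thickening_iff.1 hu
  have hmem : (u, v) ∈ G := by
    refine hrG (mem_thickening_iff.2 ⟨(x, x), mem_image_of_mem _ hx, ?_⟩)
    rw [Prod.dist_eq]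
    refine max_lt (hux.trans (half_lt_self hr)) ?_
    change dist v x < r
    linarith [dist_triangle_left v x u]
  have := interior_subset (s := {p : RSphere × RSphere |
    2 * dist p.1 p.2 ≤ dist (f^[m] p.1) (f^[m] p.2)}) hmem
  exact this

lemma not_mem_critSet_of_expandingOn (hexp : ExpandingOn f X) {x : RSphere} (hx : x ∈ X) :
    x ∉ critSet f := by
  obtain ⟨c, hc, l, hl, h⟩ := hexp
  have h1 : 0 < c * l ^ 1 := by positivity
  exact (h1.trans_le (h x hx 1 le_rfl)).ne'

lemma exists_one_lt_sphDeriv (hexp : ExpandingOn f X) {x : RSphere} (hx : x ∈ X) (a : ℝ) :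
    ∃ m, 1 ≤ m ∧ a < sphDeriv f^[m] x := by
  obtain ⟨c, hc, l, hl, h⟩ := hexp
  obtain ⟨m, hm, hm1⟩ := (((tendsto_pow_atTop_atTop_of_one_lt hl).const_mul_atTop
    hc).eventually_gt_atTop a |>.and (eventually_ge_atTop 1)).exists
  exact ⟨m, hm1, hm.trans_le (h x hx m hm1)⟩

lemma topExpanding (hf : IsRationalMap f p q) (hdeg : 2 ≤ ratDeg p q)
    (hX : IsCompact X) (hexp : ExpandingOn f X) : TopExpanding f X := by
  obtain ⟨m, hm, r, hr, h⟩ := hf.exists_pos_two_mul_dist_le hdeg hX hexp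
  have hpow : ((2 : ℝ) ^ (m : ℝ)⁻¹) ^ m = 2 := Real.rpow_inv_natCast_pow zero_le_two hm.ne'
  have h1 : (1 : ℝ) < 2 ^ (m : ℝ)⁻¹ :=
    Real.one_lt_rpow one_lt_two (inv_pos.2 (Nat.cast_pos.2 hm))
  obtain ⟨M, hM, r', -, hM'⟩ := exists_adapted_metric hf.continuous hX h1 hr hm
    (fun u hu v huv => hpow.symm ▸ h u hu v huv)
    fun x hx => hf.nhds_le_map hdeg (not_mem_critSet_of_expandingOn hexp hx)
  exact ⟨M, hM, _, r', hM'⟩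

lemma subset_juliaSet (hf : IsRationalMap f p q) (hdeg : 2 ≤ ratDeg p q)
    (hX : IsCompact X) (hmaps : MapsTo f X X) (hexp : ExpandingOn f X) : X ⊆ juliaSet f := by
  obtain ⟨m, hm, r, hr, h⟩ := hf.exists_pos_two_mul_dist_le hdeg hX hexp
  rintro z hz ⟨U, hU, hzU, hequi⟩
  have h1 : ∀ᶠ y in 𝓝[U] z, ∀ n, dist (f^[n] z) (f^[n] y) < r :=
    hequi z hzU _ (dist_mem_uniformity hr)
  rw [hU.nhdsWithin_eq hzU] at h1
  obtain ⟨y, hy, hyz⟩ := ((h1.filter_mono (nhdsWithin_le_nhds (s := {z}ᶜ))).and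
    self_mem_nhdsWithin).exists
  have hgrow : ∀ i : ℕ, 2 ^ i * dist z y ≤ dist (f^[m * i] z) (f^[m * i] y) := by
    intro i
    induction i with
    | zero => simp
    | succ i ih =>
      have hmem : f^[m * i] z ∈ thickening r X :=
        self_subset_thickening hr X (hmaps.iterate (m * i) hz)
      have := h _ hmem _ (hy (m * i))
      rw [← Function.iterate_add_apply, ← Function.iterate_add_apply] at this
      rw [mul_add_one, add_comm (m * i), pow_succ]
      linarith
  have hpos : 0 < dist z y := dist_pos.2 (Ne.symm hyz)
  obtain ⟨i, hi⟩ := (((tendsto_pow_atTop_atTop_of_one_lt (one_lt_two (α := ℝ))).atTop_mul_const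
    hpos).eventually_ge_atTop r).exists
  exact absurd (hy (m * i)) (not_lt.2 (hi.trans (hgrow i)))

end IsRationalMap

/-! ### Expanding Cantor repellers -/

section GraphDirected

variable {f : RSphere → RSphere} {Λ : Set RSphere}

lemma gdsCyl_iterate_mem (G : GDS f) {m : ℕ} {z : RSphere} (hz : z ∈ gdsCyl G m) {i : ℕ}
    (hi : i ≤ m) : f^[i] z ∈ ⋃ k, G.U k := by
  induction m generalizing z i with
  | zero =>
    obtain rfl := Nat.le_zero.1 hi
    exact hz
  | succ m ih =>
    simp only [gdsCyl, mem_iUnion] at hz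
    obtain ⟨k, l, hkl, w, ⟨hw, hwl⟩, rfl⟩ := hz
    have hcl := subset_closure hwl
    cases i with
    | zero => exact mem_iUnion.2 ⟨k, G.mapsTo k l hkl hcl⟩
    | succ i =>
      rw [Function.iterate_succ_apply, G.isBranch k l hkl w hcl]
      exact ih hw (Nat.le_of_succ_le_succ hi)

lemma gdsLimit_eq (G : GDS f)
    (hcode : ∀ x ∈ Λ, ∃ k l, G.edge k l ∧ x ∈ G.U k ∧ f x ∈ G.U l ∧ G.br k l (f x) = x)
    (hmaps : MapsTo f Λ Λ) (hiso : ∀ z, (∀ i, f^[i] z ∈ ⋃ k, G.U k) → z ∈ Λ) :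
    gdsLimit G = Λ := by
  refine Subset.antisymm (fun z hz => hiso z fun i => ?_) (subset_iInter fun m => ?_)
  · exact gdsCyl_iterate_mem G (mem_iInter.1 hz i) le_rfl
  · induction m with
    | zero =>
      intro x hx
      obtain ⟨k, l, -, hk, -⟩ := hcode x hx
      exact mem_iUnion.2 ⟨k, hk⟩
    | succ m ih =>
      intro x hx
      obtain ⟨k, l, hkl, -, hl, hbr⟩ := hcode x hx
      simp only [gdsCyl, mem_iUnion]
      exact ⟨k, l, hkl, f x, ⟨ih (hmaps hx), hl⟩, hbr⟩

lemma GDS.disjoint_U (G : GDS f) {k l : Fin G.n} (h : k ≠ l) : Disjoint (G.U k) (G.U l) :=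
  (disjoint_iff_inter_eq_empty.2 (G.disjClosure k l h)).mono subset_closure subset_closure

lemma GDS.eq_of_mem (G : GDS f) {k l : Fin G.n} {x : RSphere} (hk : x ∈ G.U k)
    (hl : x ∈ G.U l) : k = l := by
  by_contra h
  exact disjoint_left.1 (G.disjoint_U h) hk hl

lemma GDS.br_apply_eq (G : GDS f) {k l : Fin G.n} {x : RSphere} (hx : x ∈ gdsLimit G)
    (hk : x ∈ G.U k) (hl : f x ∈ G.U l) : G.br k l (f x) = x := by
  have h1 := mem_iInter.1 hx 1
  simp only [gdsCyl, mem_iUnion] at h1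
  obtain ⟨k', l', hkl, w, ⟨-, hw⟩, rfl⟩ := h1
  have hcl := subset_closure hw
  rw [G.isBranch k' l' hkl w hcl] at hl ⊢
  rw [G.eq_of_mem hk (G.mapsTo k' l' hkl hcl), G.eq_of_mem hl hw]

end GraphDirected

namespace IsRationalMap

variable {f : RSphere → RSphere} {p q : Polynomial ℂ} {X Λ : Set RSphere}

lemma isTotallyDisconnected_of_isECR (hf : IsRationalMap f p q) (hdeg : 2 ≤ ratDeg p q)
    (h : IsECR f Λ) : IsTotallyDisconnected Λ := by
  obtain ⟨hexp, ⟨hc, hinv, -⟩, G, rfl⟩ := h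
  refine (hf.topExpanding hdeg hc hexp).isTotallyDisconnected hf.continuous hc
    (mapsTo_iff_image_subset.2 hinv.le) G.U G.isOpen (fun k l => G.disjoint_U)
    (iInter_subset _ 0) ?_
  rintro k l x ⟨⟨hx, hxk⟩, hxl⟩ y ⟨⟨hy, hyk⟩, hyl⟩ hxy
  rw [← G.br_apply_eq hx hxk hxl, ← G.br_apply_eq hy hyk hyl, hxy]

/-- A totally disconnected expanding set without critical points lies in an expanding Cantor
repeller. -/
lemma exists_isECR (hf : IsRationalMap f p q) (hdeg : 2 ≤ ratDeg p q) (hX : IsCompact X)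
    (hne : X.Nonempty) (hsurj : f '' X = X) (htd : IsTotallyDisconnected X)
    (hcrit : ∀ x ∈ X, x ∉ critSet f) (hexp : ∀ x ∈ X, ∃ m, 1 ≤ m ∧ 1 < sphDeriv f^[m] x) :
    ∃ Λ, Λ ⊆ juliaSet f ∧ IsECR f Λ ∧ X ⊆ Λ ∧ (ChainTransitiveOn f X → TopTransOn f Λ) := by
  have hmaps : MapsTo f X X := mapsTo_iff_image_subset.2 hsurj.le
  obtain ⟨O, hO, hXO, hOexp⟩ := hf.exists_isOpen_expanding hdeg hX hcrit hexp
  obtain ⟨Λ, W, hXΛ, hΛ, hΛsurj, hW, hΛW, hWO, hiso, hΛtd, htrans⟩ :=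
    (hf.topExpanding hdeg hX (hOexp X hXO hmaps)).exists_isolated hf.continuous hX hmaps hsurj
      htd hO hXO
  have hΛmaps : MapsTo f Λ Λ := mapsTo_iff_image_subset.2 hΛsurj.le
  have hΛexp : ExpandingOn f Λ := hOexp Λ (hΛW.trans hWO) hΛmaps
  refine ⟨Λ, hf.subset_juliaSet hdeg hΛ hΛmaps hΛexp,
    ⟨hΛexp, ⟨hΛ, hΛsurj, W, hW, hΛW, hiso⟩, ?_⟩, hXΛ, htrans⟩
  obtain ⟨n, hn, U, edge, br, hUo, hUc, hUW, hUd, hbrmaps, hbr, hcode⟩ :=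
    (hf.topExpanding hdeg hΛ hΛexp).exists_markov hΛ (hne.mono hXΛ) hΛmaps hΛtd hW hΛW hiso
  obtain ⟨C, hC⟩ := Finite.exists_le fun kl : Fin n × Fin n =>
    distortionOn (br kl.1 kl.2) (closure (U kl.2))
  refine ⟨⟨n, hn, U, edge, br, hUo, hUc, hUd, hbrmaps, hbr, C, fun k l _ => hC (k, l)⟩, ?_⟩
  exact gdsLimit_eq _ hcode hΛmaps fun z hz => hiso z fun i => iUnion_subset hUW (hz i)

/-- A backward orbit avoiding the critical set can be redirected to accumulate only on a given
expanding set. -/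
lemma exists_bridge (hf : IsRationalMap f p q) (hdeg : 2 ≤ ratDeg p q) (hJ : Λ ⊆ juliaSet f)
    (h : IsECR f Λ) (hne : Λ.Nonempty) {x : RSphere} (hx : NonImmPostCrit f x) :
    ∃ y : ℕ → RSphere, y 0 = x ∧ (∀ k, f (y (k + 1)) = y k) ∧ (∀ k, y k ∉ critSet f) ∧
      ∀ O, IsOpen O → Λ ⊆ O → ∀ᶠ k in atTop, y k ∈ O := by
  obtain ⟨hexp, ⟨hc, hinv, -⟩, -⟩ := h
  obtain ⟨b, rfl, hb, hbJ, hbcrit⟩ := hx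
  exact (hf.topExpanding hdeg hc hexp).exists_bridge hc hne hinv (hf.isOpen_compl_critSet hdeg)
    (fun x hx => not_mem_critSet_of_expandingOn hexp hx) hb hbcrit (hJ.trans hbJ)

lemma exists_one_lt_of_backward_orbit (hf : IsRationalMap f p q) (hdeg : 2 ≤ ratDeg p q)
    (hexp : ExpandingOn f Λ) {y : ℕ → RSphere} (hy0 : y 0 ∈ Λ)
    (hy : ∀ k, f (y (k + 1)) = y k) (hcrit : ∀ k, y k ∉ critSet f) (k : ℕ) :
    ∃ m, 1 ≤ m ∧ 1 < sphDeriv f^[m] (y k) := by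
  have key : f^[k] (y k) = y 0 ∧ 0 < sphDeriv f^[k] (y k) := by
    induction k with
    | zero => exact ⟨rfl, by rw [sphDeriv_iterate_zero]; exact one_pos⟩
    | succ k ih =>
      have h1 : 0 < sphDeriv f^[1] (y (k + 1)) :=
        lt_of_le_of_ne (hf.sphDeriv_nonneg hdeg 1 _) (Ne.symm (hcrit (k + 1)))
      have h2 : f^[1] (y (k + 1)) = y k := hy k
      rw [Function.iterate_succ_apply, hy k, hf.sphDeriv_iterate_add hdeg, h2]
      exact ⟨ih.1, mul_pos ih.2 h1⟩
  obtain ⟨m, hm1, hm⟩ := exists_one_lt_sphDeriv hexp hy0 (sphDeriv f^[k] (y k))⁻¹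
  refine ⟨m + k, by omega, ?_⟩
  rw [hf.sphDeriv_iterate_add hdeg, key.1]
  calc 1 = (sphDeriv f^[k] (y k))⁻¹ * sphDeriv f^[k] (y k) := (inv_mul_cancel₀ key.2.ne').symm
    _ < _ := mul_lt_mul_of_pos_right hm key.2

end IsRationalMap

/-- **Lemma (building bridges).**
For any two disjoint `f`-expanding Cantor repellers `Λ₁, Λ₂ ⊆ J` that both contain
non-immediately postcritical points there is an `f`-expanding Cantor repeller
`Λ ⊆ J` containing `Λ₁ ∪ Λ₂`; if `f` is topologically transitive on each `Λᵢ` then it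
is topologically transitive on `Λ`. -/
theorem bridge_between_ECRs (f : RSphere → RSphere) (p q : Polynomial ℂ)
    (hf : IsRationalMap f p q) (hdeg : 2 ≤ ratDeg p q)
    (Λ₁ Λ₂ : Set RSphere) (h1J : Λ₁ ⊆ juliaSet f) (h2J : Λ₂ ⊆ juliaSet f)
    (h1 : IsECR f Λ₁) (h2 : IsECR f Λ₂) (hdisj : Disjoint Λ₁ Λ₂)
    (hp1 : ∃ x ∈ Λ₁, NonImmPostCrit f x) (hp2 : ∃ x ∈ Λ₂, NonImmPostCrit f x) :
    ∃ Λ : Set RSphere, Λ ⊆ juliaSet f ∧ IsECR f Λ ∧ Λ₁ ∪ Λ₂ ⊆ Λ ∧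
      (TopTransOn f Λ₁ → TopTransOn f Λ₂ → TopTransOn f Λ) := by
  obtain ⟨x₁, hx₁, hx₁c⟩ := hp1
  obtain ⟨x₂, hx₂, hx₂c⟩ := hp2
  obtain ⟨y, hy0, hy, hyc, hyO⟩ := hf.exists_bridge hdeg h1J h1 ⟨x₁, hx₁⟩ hx₂c
  obtain ⟨w, hw0, hw, hwc, hwO⟩ := hf.exists_bridge hdeg h2J h2 ⟨x₂, hx₂⟩ hx₁c
  rw [← hy0] at hx₂
  rw [← hw0] at hx₁
  have htd₁ := hf.isTotallyDisconnected_of_isECR hdeg h1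
  have htd₂ := hf.isTotallyDisconnected_of_isECR hdeg h2
  obtain ⟨hexp₁, ⟨hc₁, hinv₁, -⟩, -⟩ := h1
  obtain ⟨hexp₂, ⟨hc₂, hinv₂, -⟩, -⟩ := h2
  have hu : ∀ O, IsOpen O → Λ₁ ∪ Λ₂ ⊆ O → ∀ᶠ i in cofinite, Sum.elim y w i ∈ O := by
    intro O hO hsub
    have hy' := hyO O hO (subset_union_left.trans hsub)
    have hw' := hwO O hO (subset_union_right.trans hsub)
    rw [← Nat.cofinite_eq_atTop, eventually_cofinite] at hy' hw'
    rw [eventually_cofinite]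
    refine ((hy'.image Sum.inl).union (hw'.image Sum.inr)).subset ?_
    rintro (k | k) hk
    · exact Or.inl ⟨k, hk, rfl⟩
    · exact Or.inr ⟨k, hk, rfl⟩
  have hcomp := (hc₁.union hc₂).union_image_of_eventually hu univ
  rw [image_univ] at hcomp
  have htd := (htd₁.union_of_isClosed htd₂ hc₁.isClosed hc₂.isClosed
    hdisj).union_range_of_eventually (hc₁.union hc₂) hu
  have hsurj : f '' (Λ₁ ∪ Λ₂ ∪ range (Sum.elim y w)) = Λ₁ ∪ Λ₂ ∪ range (Sum.elim y w) := by
    have hinv : f '' (Λ₁ ∪ Λ₂) = Λ₁ ∪ Λ₂ := by rw [image_union, hinv₁, hinv₂]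
    rw [image_union, hinv]
    refine Subset.antisymm (union_subset subset_union_left ?_)
      (union_subset subset_union_left ?_)
    · rintro _ ⟨_, ⟨(_ | k) | (_ | k), rfl⟩, rfl⟩
      · exact Or.inl (hinv.subset (mem_image_of_mem f (Or.inr hx₂)))
      · exact Or.inr ⟨Sum.inl k, (hy k).symm⟩
      · exact Or.inl (hinv.subset (mem_image_of_mem f (Or.inl hx₁)))
      · exact Or.inr ⟨Sum.inr k, (hw k).symm⟩
    · rintro _ ⟨k | k, rfl⟩
      · exact Or.inr ⟨_, ⟨Sum.inl (k + 1), rfl⟩, hy k⟩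
      · exact Or.inr ⟨_, ⟨Sum.inr (k + 1), rfl⟩, hw k⟩
  obtain ⟨Λ, hJ, hECR, hsub, htrans⟩ := hf.exists_isECR hdeg hcomp
    ⟨y 0, Or.inl (Or.inr hx₂)⟩ hsurj htd
    (by
      rintro _ ((hx | hx) | ⟨k | k, rfl⟩)
      · exact IsRationalMap.not_mem_critSet_of_expandingOn hexp₁ hx
      · exact IsRationalMap.not_mem_critSet_of_expandingOn hexp₂ hx
      · exact hyc k
      · exact hwc k)
    (by
      rintro _ ((hx | hx) | ⟨k | k, rfl⟩)
      · exact IsRationalMap.exists_one_lt_sphDeriv hexp₁ hx 1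
      · exact IsRationalMap.exists_one_lt_sphDeriv hexp₂ hx 1
      · exact hf.exists_one_lt_of_backward_orbit hdeg hexp₂ hx₂ hy hyc k
      · exact hf.exists_one_lt_of_backward_orbit hdeg hexp₁ hx₁ hw hwc k)
  refine ⟨Λ, hJ, hECR, subset_union_left.trans hsub, fun ht₁ ht₂ => htrans ?_⟩
  exact ChainTransitiveOn.union_bridges hinv₁ hinv₂
    (chainTransitiveOn_of_transitive hf.continuous (mapsTo_iff_image_subset.2 hinv₁.le) ht₁)
    (chainTransitiveOn_of_transitive hf.continuous (mapsTo_iff_image_subset.2 hinv₂.le) ht₂)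
    hx₂ hx₁ hy hw hyO hwO
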